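/- Let α be a temperate distribution on ℝ such that both Λ = supp(α) and S = supp(α̂) are uniformly discrete sets. Then Λ is contained in a finite union of translates of a single lattice L = cℤ (c > 0). -/

import Mathlib

open MeasureTheory SchwartzMap Complex Filter

noncomputable section

/-- Tempered distributions on ℝ. -/
abbrev TemperedDist := SchwartzMap ℝ ℂ →L[ℂ] ℂ

/-- Fourier transform of a tempered distribution. -/
def fourierTD (α : TemperedDist) : TemperedDist :=
  α.comp (SchwartzMap.fourierTransformCLM ℂ)

/-- Action of the p-th derivative of the Dirac delta at x on a test function. -/
def diracDeriv (p : ℕ) (x : ℝ) (φ : SchwartzMap ℝ ℂ) : ℂ :=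
  (-1 : ℂ) ^ p * iteratedDeriv p (⇑φ) x

/-- Support of a tempered distribution. -/
def TDsupport (α : TemperedDist) : Set ℝ :=
  {x : ℝ | ∀ U : Set ℝ, IsOpen U → x ∈ U →
    ∃ φ : SchwartzMap ℝ ℂ, tsupport ⇑φ ⊆ U ∧ α φ ≠ 0}

/-- Uniformly discrete set. -/
def UniformlyDiscrete (Λ : Set ℝ) : Prop :=
  ∃ δ > (0:ℝ), ∀ x ∈ Λ, ∀ y ∈ Λ, x ≠ y → δ ≤ |x - y|

/-- Counting function. -/
def countFn (Λ : Set ℝ) (r : ℝ) : ℝ := (Λ ∩ Set.Icc (-r) r).ncard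

/-- Logarithmic lower density. -/
def DK (Λ : Set ℝ) : ℝ :=
  liminf (fun R : ℝ => (1 / (2 * R)) * ∫ r in (1:ℝ)..R, countFn Λ r / r) atTop

/-- Locally finite set. -/
def LocallyFinite' (Λ : Set ℝ) : Prop :=
  ∀ K : Set ℝ, IsCompact K → (Λ ∩ K).Finite

/-- pointwise Leibniz bound -/
lemma leib_bound {f g : ℝ → ℂ} {x : ℝ} {Q : ℕ} {B1 B2 w1 w2 : ℝ}
    (hf : ContDiff ℝ (⊤ : ℕ∞) f) (hg : ContDiff ℝ (⊤ : ℕ∞) g)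
    (hB1 : 0 ≤ B1) (hw1 : 0 ≤ w1)
    (h1 : ∀ j ≤ Q, ‖iteratedDeriv j f x‖ ≤ B1 ^ j * w1)
    (h2 : ∀ j ≤ Q, ‖iteratedDeriv j g x‖ ≤ B2 ^ j * w2) :
    ∀ j ≤ Q, ‖iteratedDeriv j (f * g) x‖ ≤ (B1 + B2) ^ j * (w1 * w2) := by
  intro j hj
  rw [iteratedDeriv_mul ((hf.of_le (by exact_mod_cast le_top)).contDiffAt)
    ((hg.of_le (by exact_mod_cast le_top)).contDiffAt), add_pow, Finset.sum_mul]
  refine (norm_sum_le _ _).trans (Finset.sum_le_sum fun i hi => ?_)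
  have hi' : i ≤ j := by simp at hi; omega
  rw [norm_mul, norm_mul, Complex.norm_natCast]
  have a1 := h1 i (hi'.trans hj)
  have a2 := h2 (j - i) (by omega)
  calc (j.choose i : ℝ) * ‖iteratedDeriv i f x‖ * ‖iteratedDeriv (j - i) g x‖
      ≤ (j.choose i : ℝ) * (B1 ^ i * w1) * (B2 ^ (j - i) * w2) := by gcongr
    _ = _ := by ring

/-- weighted Schwartz bound -/
def SB (K Q : ℕ) (f : ℝ → ℂ) (B : ℝ) : Prop :=
  ∀ j ≤ Q, ∀ x : ℝ, (1 + |x|) ^ K * ‖iteratedDeriv j f x‖ ≤ B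

lemma SB_nonneg {K Q : ℕ} {f : ℝ → ℂ} {B : ℝ} (h : SB K Q f B) : 0 ≤ B :=
  le_trans (by positivity) (h 0 (Nat.zero_le _) 0)

lemma exists_SB (φ : SchwartzMap ℝ ℂ) (K Q : ℕ) : ∃ B, SB K Q φ B := by
  refine ⟨2 ^ K * ((Finset.Iic (K, Q)).sup fun m => SchwartzMap.seminorm ℂ m.1 m.2) φ, ?_⟩
  intro j hj x
  have := SchwartzMap.one_add_le_sup_seminorm_apply (𝕜 := ℂ) (m := (K, Q)) (k := K) (n := j) le_rfl hj φ x
  rw [norm_iteratedFDeriv_eq_norm_iteratedDeriv] at this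
  simpa using this

lemma td_bound (α : TemperedDist) : ∃ C : ℝ, 0 ≤ C ∧ ∃ K Q : ℕ, ∀ (φ : SchwartzMap ℝ ℂ) (B : ℝ),
    SB K Q φ B → ‖α φ‖ ≤ C * B := by
  obtain ⟨s, C, hC, h⟩ := Seminorm.bound_of_continuous (schwartz_withSeminorms ℂ ℝ ℂ)
    ((normSeminorm ℂ ℂ).comp α.toLinearMap) (by
      change Continuous fun φ => ‖α φ‖
      fun_prop)
  refine ⟨C, C.2, s.sup Prod.fst, s.sup Prod.snd, fun φ B hB => ?_⟩
  have h1 := h φ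
  have hB0 := SB_nonneg hB
  refine h1.trans ?_
  change (C : ℝ) * _ ≤ _
  refine mul_le_mul_of_nonneg_left (Seminorm.finset_sup_apply_le hB0 fun i hi => ?_) C.2
  refine SchwartzMap.seminorm_le_bound' ℂ i.1 i.2 φ hB0 fun x => ?_
  refine le_trans ?_ (hB i.2 (Finset.le_sup (f := Prod.snd) hi) x)
  gcongr
  calc |x| ^ i.1 ≤ (1 + |x|) ^ i.1 := by gcongr; linarith
    _ ≤ (1 + |x|) ^ (s.sup Prod.fst) := by
      gcongr
      · linarith [abs_nonneg x]
      · exact Finset.le_sup (f := Prod.fst) hi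

lemma exists_schwartz {f : ℝ → ℂ} (hc : HasCompactSupport f) (hs : ContDiff ℝ (⊤ : ℕ∞) f) :
    ∃ ψ : SchwartzMap ℝ ℂ, ⇑ψ = f := ⟨hc.toSchwartzMap hs, rfl⟩

lemma exists_X : ∃ X : SchwartzMap ℝ ℂ, (∀ x, |x| ≤ 1 → X x = 1) ∧ (∀ x, 2 ≤ |x| → X x = 0) := by
  let b : ContDiffBump (0 : ℝ) := ⟨1, 2, one_pos, one_lt_two⟩
  have hs : ContDiff ℝ (⊤ : ℕ∞) (fun x => ((b x : ℝ) : ℂ)) :=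
    Complex.ofRealCLM.contDiff.comp b.contDiff
  have hc : HasCompactSupport (fun x => ((b x : ℝ) : ℂ)) :=
    b.hasCompactSupport.comp_left (g := fun x : ℝ => (x : ℂ)) Complex.ofReal_zero
  obtain ⟨ψ, hψ⟩ := exists_schwartz hc hs
  refine ⟨ψ, fun x hx => ?_, fun x hx => ?_⟩
  · rw [hψ]
    simp only [ofReal_eq_one]
    exact b.one_of_mem_closedBall (by simpa [b] using hx)
  · rw [hψ]
    simp only [ofReal_eq_zero]
    exact b.zero_of_le_dist (by simpa [b] using hx)

lemma smoothS (φ : SchwartzMap ℝ ℂ) : ContDiff ℝ (⊤ : ℕ∞) φ := φ.smooth ⊤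

lemma exists_D (φ : SchwartzMap ℝ ℂ) (Q : ℕ) : ∃ D : ℝ, 0 ≤ D ∧ ∀ j ≤ Q, ∀ x, ‖iteratedDeriv j φ x‖ ≤ D := by
  obtain ⟨B, hB⟩ := exists_SB φ 0 Q
  exact ⟨B, SB_nonneg hB, fun j hj x => by simpa using hB j hj x⟩

lemma iter_comp_smul (φ : SchwartzMap ℝ ℂ) (c : ℝ) (j : ℕ) (x : ℝ) :
    iteratedDeriv j (fun y => φ (c * y)) x = (c : ℂ) ^ j * iteratedDeriv j φ (c * x) := by
  rw [iteratedDeriv_comp_const_smul (φ.smooth _)]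
  simp

/-- compactly supported approximations -/
lemma exists_cutoff (φ : SchwartzMap ℝ ℂ) (K Q : ℕ) {ε : ℝ} (hε : 0 < ε) :
    ∃ ψ : SchwartzMap ℝ ℂ, HasCompactSupport ψ ∧ tsupport ψ ⊆ tsupport φ ∧ SB K Q (φ - ψ : SchwartzMap ℝ ℂ) ε := by
  obtain ⟨X, hX1, hX2⟩ := exists_X
  obtain ⟨D, hD0, hD⟩ := exists_D X Q
  obtain ⟨B, hB⟩ := exists_SB φ (K + 1) Q
  have hB0 := SB_nonneg hB
  obtain ⟨R, hR1, hR⟩ : ∃ R : ℝ, 1 ≤ R ∧ 2 ^ Q * ((D + 1) * B) ≤ ε * R := by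
    refine ⟨max 1 (2 ^ Q * ((D + 1) * B) / ε), le_max_left _ _, ?_⟩
    calc _ = ε * (2 ^ Q * ((D + 1) * B) / ε) := by field_simp
      _ ≤ _ := by gcongr; exact le_max_right _ _
  have hR0 : 0 < R := by linarith
  set f : ℝ → ℂ := fun x => X (R⁻¹ * x) with hf
  have hfs : ContDiff ℝ (⊤ : ℕ∞) f := (smoothS X).comp (contDiff_const.mul contDiff_id)
  have hfc : HasCompactSupport f := by
    refine HasCompactSupport.intro (isCompact_Icc (a := -(2 * R)) (b := 2 * R)) fun x hx => ?_
    apply hX2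
    rw [abs_mul, abs_of_pos (inv_pos.2 hR0)]
    have : 2 * R ≤ |x| := by
      by_contra h
      push Not at h
      exact hx (Set.mem_Icc.2 (abs_le.1 h.le))
    rw [inv_mul_eq_div, le_div_iff₀ hR0]; exact this
  obtain ⟨ψ, hψ⟩ := exists_schwartz (f := f * φ) hfc.mul_right (hfs.mul (smoothS φ))
  refine ⟨ψ, ?_, ?_, ?_⟩
  · rw [hψ]; exact hfc.mul_right
  · rw [hψ]; exact tsupport_mul_subset_right
  · intro j hj x
    have e : ⇑(φ - ψ) = (1 - f) * φ := by
      ext y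
      simp [hψ]; ring
    rw [e]
    rcases lt_or_ge |x| R with hx | hx
    · have : ((1 - f) * φ : ℝ → ℂ) =ᶠ[nhds x] fun _ => 0 := by
        have : ∀ᶠ y in nhds x, |y| < R := (continuous_abs.tendsto x).eventually (gt_mem_nhds hx)
        filter_upwards [this] with y hy
        have : f y = 1 := by
          apply hX1
          rw [abs_mul, abs_of_pos (inv_pos.2 hR0), inv_mul_eq_div, div_le_one hR0]
          exact hy.le
        simp [this]
      rw [this.iteratedDeriv_eq]
      simp [iteratedDeriv_const]
      positivity
    · have h1 : ∀ j ≤ Q, ‖iteratedDeriv j (1 - f) x‖ ≤ 1 ^ j * (D + 1) := by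
        intro j hj
        have hb : ‖iteratedDeriv j f x‖ ≤ D := by
          rw [hf, iter_comp_smul, norm_mul, norm_pow]
          have : ‖((R⁻¹ : ℝ) : ℂ)‖ ^ j ≤ 1 := by
            apply pow_le_one₀ (norm_nonneg _)
            rw [Complex.norm_real, Real.norm_of_nonneg (by positivity)]
            exact inv_le_one_of_one_le₀ hR1
          calc _ ≤ 1 * D := by gcongr; exact hD j hj _
            _ = D := one_mul _
        rw [iteratedDeriv_sub (f := (1 : ℝ → ℂ)) (contDiff_const (c := (1 : ℂ))).contDiffAt
          ((hfs.of_le (by exact_mod_cast le_top)).contDiffAt)]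
        refine (norm_sub_le _ _).trans ?_
        have : ‖iteratedDeriv j (1 : ℝ → ℂ) x‖ ≤ 1 := by
          have : (1 : ℝ → ℂ) = fun _ => 1 := rfl
          rw [this, iteratedDeriv_const]
          split_ifs <;> simp
        simp; linarith
      have h2 : ∀ j ≤ Q, ‖iteratedDeriv j φ x‖ ≤ 1 ^ j * (B / (1 + |x|) ^ (K + 1)) := by
        intro j hj
        rw [one_pow, one_mul, le_div_iff₀ (by positivity), mul_comm]
        exact hB j hj x
      have := leib_bound (contDiff_const.sub hfs) (smoothS φ) zero_le_one (by linarith) h1 h2 j hj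
      calc _ ≤ (1 + |x|) ^ K * ((1 + 1) ^ j * ((D + 1) * (B / (1 + |x|) ^ (K + 1)))) := by
            gcongr; exact this
        _ = (1 + 1) ^ j * ((D + 1) * B) / (1 + |x|) := by rw [pow_succ]; field_simp
        _ ≤ 2 ^ Q * ((D + 1) * B) / R := by
            norm_num
            gcongr
            · norm_num
            · linarith
        _ ≤ ε := by rw [div_le_iff₀ hR0]; exact hR

/-- `α` kills compactly supported test functions supported in `V`. -/
def Kills (α : TemperedDist) (V : Set ℝ) : Prop :=
  ∀ ψ : SchwartzMap ℝ ℂ, HasCompactSupport ψ → tsupport ψ ⊆ V → α ψ = 0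

lemma kills_union {α : TemperedDist} {V1 V2 : Set ℝ} (o1 : IsOpen V1) (o2 : IsOpen V2)
    (h1 : Kills α V1) (h2 : Kills α V2) : Kills α (V1 ∪ V2) := by
  intro ψ hc hV
  have hcl : IsClosed (tsupport ψ \ V2) := (isClosed_tsupport _).sdiff o2
  have hsub : tsupport ψ \ V2 ⊆ V1 := by
    intro x hx
    rcases hV hx.1 with h | h
    · exact h
    · exact absurd h hx.2
  obtain ⟨u, hu, hsu, huV⟩ := normal_exists_closure_subset hcl o1 hsub
  obtain ⟨f, hf1, hf0, -⟩ := exists_contMDiffMap_one_nhds_of_subset_interior (n := ⊤)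
    (modelWithCornersSelf ℝ ℝ) hcl (t := closure u)
    (hsu.trans (interior_maximal subset_closure hu))
  set g : ℝ → ℂ := fun x => ((f x : ℝ) : ℂ) with hg
  have hgs : ContDiff ℝ (⊤ : ℕ∞) g := by
    have : ContDiff ℝ (⊤ : ℕ∞) f := f.contMDiff.contDiff
    exact Complex.ofRealCLM.contDiff.comp this
  obtain ⟨ψ1, e1⟩ := exists_schwartz (f := g * ψ) hc.mul_left (hgs.mul (smoothS ψ))
  obtain ⟨ψ2, e2⟩ := exists_schwartz (f := (1 - g) * ψ) hc.mul_left
    ((contDiff_const.sub hgs).mul (smoothS ψ))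
  have e : ψ = ψ1 + ψ2 := by
    ext x
    simp [e1, e2]; ring
  rw [e, map_add, h1 ψ1, h2 ψ2, add_zero]
  · rw [e2]; exact hc.mul_left
  · rw [e2]
    intro x hx
    by_contra hxV
    have hxs : x ∈ tsupport ψ \ V2 := ⟨tsupport_mul_subset_right hx, hxV⟩
    have : ∀ᶠ y in nhds x, f y = 1 := by
      rw [eventually_nhdsSet_iff_forall] at hf1
      exact hf1 x hxs
    have h0 : ((1 - g) * ψ : ℝ → ℂ) =ᶠ[nhds x] 0 := by
      filter_upwards [this] with y hy
      simp [hg, hy]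
    exact (notMem_tsupport_iff_eventuallyEq.2 h0) hx
  · rw [e1]; exact hc.mul_left
  · rw [e1]
    refine (tsupport_mul_subset_left).trans (subset_trans ?_ huV)
    refine closure_minimal ?_ isClosed_closure
    intro x hx
    by_contra hxu
    exact hx (by simp [hg, hf0 x hxu])

lemma kills_of_disjoint {α : TemperedDist} {φ : SchwartzMap ℝ ℂ} 
    (h : Disjoint (tsupport φ) (TDsupport α)) : α φ = 0 := by
  have hcs : ∀ φ : SchwartzMap ℝ ℂ, HasCompactSupport φ → Disjoint (tsupport φ) (TDsupport α) →
      α φ = 0 := by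
    intro φ hc h
    have : ∃ V, IsOpen V ∧ tsupport φ ⊆ V ∧ Kills α V := by
      refine IsCompact.induction_on (p := fun s => ∃ V, IsOpen V ∧ s ⊆ V ∧ Kills α V) hc ?_ ?_ ?_ ?_
      · refine ⟨∅, isOpen_empty, le_rfl, fun ψ _ h => ?_⟩
        have : tsupport ψ = ∅ := Set.subset_empty_iff.1 h
        rw [tsupport_eq_empty_iff] at this
        have : ψ = 0 := by ext x; simp [this]
        simp [this]
      · rintro s t hst ⟨V, h1, h2, h3⟩
        exact ⟨V, h1, hst.trans h2, h3⟩
      · rintro s t ⟨V, h1, h2, h3⟩ ⟨W, g1, g2, g3⟩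
        exact ⟨V ∪ W, h1.union g1, Set.union_subset_union h2 g2, kills_union h1 g1 h3 g3⟩
      · intro x hx
        have : x ∉ TDsupport α := Set.disjoint_left.1 h hx
        simp only [TDsupport, Set.mem_setOf_eq, not_forall] at this
        obtain ⟨U, hU, hxU, hn⟩ := this
        push Not at hn
        exact ⟨U, mem_nhdsWithin_of_mem_nhds (hU.mem_nhds hxU), U, hU, le_rfl, fun ψ _ h => hn ψ h⟩
    obtain ⟨V, -, h2, h3⟩ := this
    exact h3 φ hc h2
  obtain ⟨C, hC, K, Q, hb⟩ := td_bound α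
  have : ∀ ε > 0, ‖α φ‖ ≤ C * ε := by
    intro ε hε
    obtain ⟨ψ, p1, p2, p3⟩ := exists_cutoff φ K Q hε
    have := hb _ _ p3
    rwa [map_sub, hcs ψ p1 (h.mono_left p2), sub_zero] at this
  have h0 : ‖α φ‖ ≤ 0 := by
    refine le_of_forall_pos_le_add fun ε hε => ?_
    refine (this (ε / (C + 1)) (by positivity)).trans ?_
    rw [zero_add, mul_div_assoc', div_le_iff₀ (by positivity)]
    nlinarith
  exact norm_le_zero_iff.1 h0

lemma iter_comp_sub (f : ℝ → ℂ) (l : ℝ) (j : ℕ) (x : ℝ) :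
    iteratedDeriv j (fun z => f (z - l)) x = iteratedDeriv j f (x - l) := by
  have := iteratedDeriv_comp_sub_const j f l
  exact congrFun this x

lemma taylor_vanish (ψ : SchwartzMap ℝ ℂ) (Q : ℕ) (l : ℝ) (h0 : ∀ j ≤ Q, iteratedDeriv j ψ l = 0)
    {D : ℝ} (hD0 : 0 ≤ D) (hD : ∀ j ≤ Q + 1, ∀ x, ‖iteratedDeriv j ψ x‖ ≤ D) :
    ∀ i ≤ Q + 1, ∀ x, ‖iteratedDeriv (Q + 1 - i) ψ x‖ ≤ D * |x - l| ^ i := by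
  intro i
  induction i with
  | zero => intro _ x; simpa using hD (Q + 1) le_rfl x
  | succ i ih =>
    intro hi x
    have ih' := ih (by omega)
    set j := Q + 1 - (i + 1) with hj
    have hj1 : Q + 1 - i = j + 1 := by omega
    rw [hj1] at ih'
    have hd : Differentiable ℝ (iteratedDeriv j ψ) :=
      (smoothS ψ).differentiable_iteratedDeriv j (by exact_mod_cast WithTop.coe_lt_top j)
    have := Convex.norm_image_sub_le_of_norm_deriv_le (f := iteratedDeriv j ψ) (C := D * |x - l| ^ i)
      (s := Set.uIcc l x) (x := l) (y := x) (fun y _ => hd y) (fun y hy => by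
        rw [← iteratedDeriv_succ]
        refine (ih' y).trans ?_
        refine mul_le_mul_of_nonneg_left (pow_le_pow_left₀ (abs_nonneg _) ?_ i) hD0
        rcases Set.mem_uIcc.1 hy with ⟨a, b⟩ | ⟨a, b⟩
        · rw [abs_of_nonneg (by linarith), abs_of_nonneg (by linarith)]; linarith
        · rw [abs_of_nonpos (by linarith), abs_of_nonpos (by linarith)]; linarith)
      (convex_uIcc l x) Set.left_mem_uIcc Set.right_mem_uIcc
    rw [h0 j (by omega), sub_zero, Real.norm_eq_abs] at this
    refine this.trans (le_of_eq ?_)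
    rw [pow_succ]; ring

lemma vanish_jet (α : TemperedDist) {C : ℝ} {K Q : ℕ} (hC : 0 ≤ C)
    (hb : ∀ (φ : SchwartzMap ℝ ℂ) (B : ℝ), SB K Q φ B → ‖α φ‖ ≤ C * B)
    (ψ : SchwartzMap ℝ ℂ) (l : ℝ) (hs : ∀ x ∈ tsupport ψ, x ∈ TDsupport α → x = l)
    (h0 : ∀ j ≤ Q, iteratedDeriv j ψ l = 0) : α ψ = 0 := by
  obtain ⟨X, hX1, hX2⟩ := exists_X
  obtain ⟨D1, hD10, hD1⟩ := exists_D X Q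
  obtain ⟨D, hD0, hD⟩ := exists_D ψ (Q + 1)
  have ht := taylor_vanish ψ Q l h0 hD0 hD
  set A : ℝ := (1 + |l| + 2) ^ K * (4 ^ Q * 2 * (D * D1)) with hA
  have hA0 : 0 ≤ A := by positivity
  have key : ∀ ρ : ℝ, 0 < ρ → ρ ≤ 1 → ‖α ψ‖ ≤ C * (A * ρ) := by
    intro ρ hρ hρ1
    set f : ℝ → ℂ := fun x => X (ρ⁻¹ * (x - l)) with hf
    have hfs : ContDiff ℝ (⊤ : ℕ∞) f := (smoothS X).comp (contDiff_const.mul (contDiff_id.sub contDiff_const))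
    have habs : ∀ x, |ρ⁻¹ * (x - l)| = |x - l| / ρ := by
      intro x
      rw [abs_mul, abs_of_pos (inv_pos.2 hρ), inv_mul_eq_div]
    have hf1 : ∀ x, |x - l| < ρ → f x = 1 := by
      intro x hx
      apply hX1
      rw [habs, div_le_one hρ]; exact hx.le
    have hf0 : ∀ x, 2 * ρ ≤ |x - l| → f x = 0 := by
      intro x hx
      apply hX2
      rw [habs, le_div_iff₀ hρ]; exact hx
    have hfc : HasCompactSupport f := by
      refine HasCompactSupport.intro (isCompact_Icc (a := l - (2 * ρ)) (b := l + 2 * ρ)) fun x hx => ?_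
      apply hf0
      by_contra h
      push Not at h
      have := abs_lt.1 h
      exact hx (Set.mem_Icc.2 ⟨by linarith, by linarith⟩)
    obtain ⟨ψ1, e1⟩ := exists_schwartz (f := f * ψ) hfc.mul_right (hfs.mul (smoothS ψ))
    have hz : α (ψ - ψ1) = 0 := by
      apply kills_of_disjoint
      have e : ⇑(ψ - ψ1) = (1 - f) * ψ := by
        ext y
        simp [e1]; ring
      rw [e, Set.disjoint_left]
      intro x hx hxα
      have hxl := hs x (tsupport_mul_subset_right hx) hxα
      have hE : ((1 - f) * ψ : ℝ → ℂ) =ᶠ[nhds x] 0 := by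
        have : ∀ᶠ y in nhds x, |y - l| < ρ := by
          have : Continuous fun y : ℝ => |y - l| := by fun_prop
          exact (this.tendsto x).eventually (gt_mem_nhds (by simpa [hxl] using hρ))
        filter_upwards [this] with y hy
        simp [hf1 y hy]
      exact (notMem_tsupport_iff_eventuallyEq.2 hE) hx
    rw [map_sub, sub_eq_zero] at hz
    rw [hz]
    apply hb
    intro j hj x
    rw [e1]
    rcases lt_or_ge (2 * ρ) |x - l| with hx | hx
    · have hE : (f * ψ : ℝ → ℂ) =ᶠ[nhds x] fun _ => 0 := by
        have : ∀ᶠ y in nhds x, 2 * ρ < |y - l| := by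
          have : Continuous fun y : ℝ => |y - l| := by fun_prop
          exact (this.tendsto x).eventually (lt_mem_nhds hx)
        filter_upwards [this] with y hy
        simp [hf0 y hy.le]
      rw [hE.iteratedDeriv_eq]
      simp
      positivity
    · have h1 : ∀ j ≤ Q, ‖iteratedDeriv j f x‖ ≤ (ρ⁻¹) ^ j * D1 := by
        intro j hj
        have : f = fun x => (fun y => X (ρ⁻¹ * y)) (x - l) := rfl
        rw [this, iter_comp_sub (fun y => X (ρ⁻¹ * y)), iter_comp_smul, norm_mul, norm_pow]
        rw [Complex.norm_real, Real.norm_of_nonneg (by positivity)]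
        gcongr
        exact hD1 j hj _
      have h2 : ∀ j ≤ Q, ‖iteratedDeriv j ψ x‖ ≤ ((2 * ρ)⁻¹) ^ j * (D * (2 * ρ) ^ (Q + 1)) := by
        intro j hj
        have := ht (Q + 1 - j) (by omega) x
        rw [show Q + 1 - (Q + 1 - j) = j by omega] at this
        refine this.trans ?_
        calc D * |x - l| ^ (Q + 1 - j) ≤ D * (2 * ρ) ^ (Q + 1 - j) := by gcongr
          _ = _ := by
            rw [pow_sub₀ _ (by positivity) (by omega)]
            rw [inv_pow]; ring
      have h3 := leib_bound hfs (smoothS ψ) (by positivity) hD10 h1 h2 j hj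
      have hxx : 1 + |x| ≤ 1 + |l| + 2 := by
        have : |x| ≤ |x - l| + |l| := by simpa using abs_add_le (x - l) l
        linarith
      have h4 : (ρ⁻¹ + (2 * ρ)⁻¹) ^ j ≤ (2 * ρ⁻¹) ^ Q := by
        have h5 : (2 * ρ)⁻¹ ≤ ρ⁻¹ := by gcongr; linarith
        have h6 : 1 ≤ ρ⁻¹ := (one_le_inv₀ hρ).2 hρ1
        calc (ρ⁻¹ + (2 * ρ)⁻¹) ^ j ≤ (2 * ρ⁻¹) ^ j := by gcongr; linarith
          _ ≤ _ := by gcongr; linarith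
      calc _ ≤ (1 + |l| + 2) ^ K * ((2 * ρ⁻¹) ^ Q * (D1 * (D * (2 * ρ) ^ (Q + 1)))) := by
            gcongr
            exact h3.trans (by gcongr)
        _ = A * ρ := by
            rw [hA, pow_succ, mul_pow, mul_pow, inv_pow, show (4 : ℝ) = 2 * 2 by norm_num, mul_pow]
            field_simp
  have h0 : ‖α ψ‖ ≤ 0 := by
    refine le_of_forall_pos_le_add fun ε hε => ?_
    have hCA : 0 ≤ C * A := by positivity
    refine (key (min 1 (ε / (C * A + 1))) (by positivity) (min_le_left _ _)).trans ?_
    calc C * (A * min 1 (ε / (C * A + 1))) ≤ C * (A * (ε / (C * A + 1))) := by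
          gcongr; exact min_le_right _ _
      _ = C * A * ε / (C * A + 1) := by ring
      _ ≤ 0 + ε := by
        rw [div_le_iff₀ (by positivity)]; nlinarith
  exact norm_le_zero_iff.1 h0

/-- `δ`-separated -/
def USep (δ : ℝ) (Λ : Set ℝ) : Prop := ∀ x ∈ Λ, ∀ y ∈ Λ, x ≠ y → δ ≤ |x - y|

lemma sep_floor_inj {δ : ℝ} (hδ : 0 < δ) {Λ : Set ℝ} (h : USep δ Λ) (a : ℝ) :
    Set.InjOn (fun x : ℝ => ⌊(x - a) / δ⌋) Λ := by
  intro x hx y hy hxy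
  by_contra hne
  have h1 := h x hx y hy hne
  have h2 := Int.abs_sub_lt_one_of_floor_eq_floor hxy
  rw [← sub_div, abs_div, abs_of_pos hδ, div_lt_one hδ] at h2
  have : x - a - (y - a) = x - y := by ring
  rw [this] at h2
  linarith

lemma sep_count {δ : ℝ} (hδ : 0 < δ) {Λ : Set ℝ} (h : USep δ Λ) (a b : ℝ) (hab : a ≤ b) :
    (Λ ∩ Set.Icc a b).Finite ∧ ((Λ ∩ Set.Icc a b).ncard : ℝ) ≤ (b - a) / δ + 1 := by
  have hinj : Set.InjOn (fun x : ℝ => ⌊(x - a) / δ⌋) (Λ ∩ Set.Icc a b) :=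
    (sep_floor_inj hδ h a).mono Set.inter_subset_left
  have hmaps : ∀ x ∈ Λ ∩ Set.Icc a b, ⌊(x - a) / δ⌋ ∈ Set.Icc (0 : ℤ) ⌊(b - a) / δ⌋ := by
    rintro x ⟨-, h1, h2⟩
    refine ⟨Int.floor_nonneg.2 (div_nonneg (by linarith) hδ.le), Int.floor_le_floor ?_⟩
    gcongr
  have hfin : (Λ ∩ Set.Icc a b).Finite := Set.Finite.of_injOn hmaps hinj (Set.finite_Icc _ _)
  refine ⟨hfin, ?_⟩
  have h3 := Set.ncard_le_ncard_of_injOn _ hmaps hinj (Set.finite_Icc _ _)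
  have h4 : (Set.Icc (0 : ℤ) ⌊(b - a) / δ⌋).ncard = (⌊(b - a) / δ⌋ + 1).toNat := by
    rw [← Finset.coe_Icc, Set.ncard_coe_finset, Int.card_Icc]; simp
  rw [h4] at h3
  have h5 : 0 ≤ ⌊(b - a) / δ⌋ := Int.floor_nonneg.2 (div_nonneg (by linarith) hδ.le)
  have h6 : ((⌊(b - a) / δ⌋ + 1).toNat : ℝ) = (⌊(b - a) / δ⌋ : ℝ) + 1 := by
    have : (((⌊(b - a) / δ⌋ + 1).toNat : ℤ) : ℝ) = ((⌊(b - a) / δ⌋ + 1 : ℤ) : ℝ) := by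
      rw [Int.toNat_of_nonneg (by omega)]
    push_cast at this
    exact_mod_cast this
  calc ((Λ ∩ Set.Icc a b).ncard : ℝ) ≤ ((⌊(b - a) / δ⌋ + 1).toNat : ℝ) := by exact_mod_cast h3
    _ = _ := h6
    _ ≤ _ := by gcongr; exact Int.floor_le _

lemma sep_summable {δ : ℝ} (hδ : 0 < δ) {Λ : Set ℝ} (h : USep δ Λ) :
    Summable (fun l : Λ => ((1 + |(l : ℝ)|) ^ 2)⁻¹) := by
  have h1 : Summable (fun n : ℤ => ((n : ℝ) ^ 2)⁻¹) := by
    simpa using Real.summable_one_div_int_pow (p := 2) |>.2 one_lt_two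
  have h2 : Summable (fun n : ℤ => ((1 + |(n : ℝ)|) ^ 2)⁻¹) := by
    refine Summable.of_norm_bounded_eventually (g := fun n : ℤ => ((n : ℝ) ^ 2)⁻¹) h1 ?_
    have : ∀ᶠ n : ℤ in cofinite, n ≠ 0 := Filter.eventually_cofinite_ne 0
    filter_upwards [this] with n hn
    rw [Real.norm_of_nonneg (by positivity)]
    have : (0 : ℝ) < |(n : ℝ)| := abs_pos.2 (by exact_mod_cast hn)
    rw [← sq_abs (n : ℝ)]
    gcongr
    linarith
  have h3 : Summable (fun l : Λ => ((1 + |((⌊((l : ℝ) - 0) / δ⌋ : ℤ) : ℝ)|) ^ 2)⁻¹) := by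
    have : Function.Injective (fun l : Λ => ⌊((l : ℝ) - 0) / δ⌋) := by
      intro x y hxy
      exact Subtype.ext (sep_floor_inj hδ h 0 x.2 y.2 hxy)
    exact h2.comp_injective this
  refine Summable.of_nonneg_of_le (fun l => by positivity) (fun l => ?_) (h3.mul_left ((2 + 1 / δ) ^ 2))
  set n := ⌊((l : ℝ) - 0) / δ⌋ with hn
  have e1 : |(n : ℝ)| ≤ |(l : ℝ)| / δ + 1 := by
    have a1 := Int.floor_le (((l : ℝ) - 0) / δ)
    have a2 := Int.lt_floor_add_one (((l : ℝ) - 0) / δ)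
    rw [← hn] at a1 a2
    have a3 : |((l : ℝ) - 0) / δ| = |(l : ℝ)| / δ := by rw [abs_div, abs_of_pos hδ, sub_zero]
    have a4 := abs_le.1 a3.le
    rw [abs_le]
    constructor <;> linarith
  have e2 : 1 + |(n : ℝ)| ≤ (2 + 1 / δ) * (1 + |(l : ℝ)|) := by
    have : (2 + 1 / δ) * (1 + |(l : ℝ)|) = 2 + 1 / δ + 2 * |(l : ℝ)| + |(l : ℝ)| / δ := by ring
    have a : 0 < 1 / δ := by positivity
    have b := abs_nonneg (l : ℝ)
    linarith
  have e3 : (1 + |(n : ℝ)|) ^ 2 ≤ (2 + 1 / δ) ^ 2 * (1 + |(l : ℝ)|) ^ 2 := by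
    rw [← mul_pow]; gcongr
  rw [← div_eq_mul_inv, inv_eq_one_div, div_le_div_iff₀ (by positivity) (by positivity)]
  linarith

lemma iter_pow_zero (p : ℕ) : ∀ j, iteratedDeriv j (fun x : ℝ => (x : ℂ) ^ p) 0 = if j = p then (p.factorial : ℂ) else 0 := by
  induction p with
  | zero =>
    intro j
    simp [iteratedDeriv_const]
  | succ p ih =>
    intro j
    cases j with
    | zero => simp
    | succ j =>
      rw [iteratedDeriv_succ']
      have : deriv (fun x : ℝ => (x : ℂ) ^ (p + 1)) = fun x : ℝ => ((p + 1 : ℕ) : ℂ) * (x : ℂ) ^ p := by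
        ext x
        have := (hasDerivAt_pow (p + 1) (x : ℂ)).comp_ofReal
        simpa using this.deriv
      rw [this, iteratedDeriv_const_mul_field, ih]
      simp only [add_left_inj]
      split_ifs
      · rw [Nat.factorial_succ]; push_cast; ring
      · simp

/-- local term of the structure theorem -/
def TT (Q : ℕ) (c : ℝ → ℕ → ℂ) (l : ℝ) (f : ℝ → ℂ) : ℂ :=
  ∑ p ∈ Finset.range (Q + 1), c l p * iteratedDeriv p f l

lemma TT_congr {Q : ℕ} {c : ℝ → ℕ → ℂ} {l : ℝ} {f g : ℝ → ℂ} (h : f =ᶠ[nhds l] g) :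
    TT Q c l f = TT Q c l g := by
  unfold TT
  exact Finset.sum_congr rfl fun p _ => by rw [h.iteratedDeriv_eq]

lemma TT_bound {Q M : ℕ} {C : ℝ} {c : ℝ → ℕ → ℂ} {l : ℝ} (hc : ∀ p, ‖c l p‖ ≤ C * (1 + |l|) ^ M) {f : ℝ → ℂ}
    {w : ℝ} (hw : ∀ j ≤ Q, ‖iteratedDeriv j f l‖ ≤ w) : ‖TT Q c l f‖ ≤ (Q + 1) * (C * (1 + |l|) ^ M * w) := by
  unfold TT
  refine (norm_sum_le _ _).trans ?_
  refine (Finset.sum_le_card_nsmul _ _ (C * (1 + |l|) ^ M * w) fun p hp => ?_).trans ?_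
  · rw [norm_mul]
    have : p ≤ Q := by simp at hp; omega
    have h0 := (norm_nonneg _).trans (hc p)
    gcongr
    · exact hc p
    · exact hw p this
  · simp

lemma TT_sub {Q : ℕ} {c : ℝ → ℕ → ℂ} {l : ℝ} (φ ψ : SchwartzMap ℝ ℂ) :
    TT Q c l (φ - ψ : SchwartzMap ℝ ℂ) = TT Q c l φ - TT Q c l ψ := by
  unfold TT
  rw [← Finset.sum_sub_distrib]
  refine Finset.sum_congr rfl fun p _ => ?_
  have : ⇑(φ - ψ) = ⇑φ - ⇑ψ := by ext; simp
  rw [this, iteratedDeriv_sub ((φ.smooth _).contDiffAt) ((ψ.smooth _).contDiffAt)]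
  ring

/-- structure data -/
structure SData (α : TemperedDist) where
  Q : ℕ
  M : ℕ
  C : ℝ
  c : ℝ → ℕ → ℂ
  hC : 0 ≤ C
  hc : ∀ l p, ‖c l p‖ ≤ C * (1 + |l|) ^ M
  hsum : ∀ φ : SchwartzMap ℝ ℂ, HasSum (fun l : TDsupport α => TT Q c l φ) (α φ)
  hne : ∀ l ∈ TDsupport α, ∃ p ≤ Q, c l p ≠ 0

theorem exists_SData (α : TemperedDist) {δ : ℝ} (hδ : 0 < δ) (hsep : USep δ (TDsupport α)) :
    Nonempty (SData α) := by
  obtain ⟨C, hC, K, Q, hb⟩ := td_bound α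
  obtain ⟨X, hX1, hX2⟩ := exists_X
  set χ : ℝ → ℂ := fun x => X (4 / δ * x) with hχ
  have hχs : ContDiff ℝ (⊤ : ℕ∞) χ := (smoothS X).comp (contDiff_const.mul contDiff_id)
  have habs : ∀ x, |4 / δ * x| = 4 * |x| / δ := by
    intro x
    rw [abs_mul, abs_of_pos (by positivity)]; ring
  have hχ1 : ∀ x, |x| < δ / 4 → χ x = 1 := by
    intro x hx
    apply hX1
    rw [habs, div_le_one hδ]; linarith
  have hχ0 : ∀ x, δ / 2 ≤ |x| → χ x = 0 := by
    intro x hx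
    apply hX2
    rw [habs, le_div_iff₀ hδ]; linarith
  have hχc : HasCompactSupport χ := by
    refine HasCompactSupport.intro (isCompact_Icc (a := -(δ / 2)) (b := δ / 2)) fun x hx => ?_
    apply hχ0
    by_contra h
    push Not at h
    exact hx (Set.mem_Icc.2 (abs_le.1 h.le))
  -- model monomials
  have hm : ∀ p : ℕ, ∃ m : SchwartzMap ℝ ℂ, ⇑m = (fun x : ℝ => (x : ℂ) ^ p) * χ := fun p =>
    exists_schwartz hχc.mul_left ((Complex.ofRealCLM.contDiff.pow p).mul hχs)
  choose m hm using hm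
  have hmj : ∀ p j, iteratedDeriv j (m p) 0 = if j = p then (p.factorial : ℂ) else 0 := by
    intro p j
    rw [← iter_pow_zero, hm]
    apply Filter.EventuallyEq.iteratedDeriv_eq
    have : ∀ᶠ y : ℝ in nhds 0, |y| < δ / 4 :=
      (continuous_abs.tendsto (0 : ℝ)).eventually (gt_mem_nhds (by simpa using hδ))
    filter_upwards [this] with y hy
    simp [hχ1 y hy]
  have hB : ∀ p, ∃ B, SB K Q (m p) B := fun p => exists_SB (m p) K Q
  choose B hB using hB
  set ml : ℝ → ℕ → SchwartzMap ℝ ℂ := fun l p => SchwartzMap.compSubConstCLM ℂ l (m p) with hml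
  have hml_coe : ∀ l p, ⇑(ml l p) = fun z => m p (z - l) := by
    intro l p; ext z; simp [hml]
  have hmlB : ∀ l p, SB K Q (ml l p) ((1 + |l|) ^ K * B p) := by
    intro l p j hj x
    rw [hml_coe, iter_comp_sub]
    have h1 : 1 + |x| ≤ (1 + |l|) * (1 + |x - l|) := by
      have : |x| ≤ |x - l| + |l| := by simpa using abs_add_le (x - l) l
      nlinarith [abs_nonneg l, abs_nonneg (x - l)]
    calc _ ≤ ((1 + |l|) * (1 + |x - l|)) ^ K * ‖iteratedDeriv j (m p) (x - l)‖ := by gcongr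
      _ = (1 + |l|) ^ K * ((1 + |x - l|) ^ K * ‖iteratedDeriv j (m p) (x - l)‖) := by rw [mul_pow]; ring
      _ ≤ _ := by gcongr; exact hB p j hj _
  set c : ℝ → ℕ → ℂ := fun l p => if p ≤ Q then α (ml l p) / p.factorial else 0 with hc
  set BB : ℝ := ∑ p ∈ Finset.range (Q + 1), B p with hBB
  have hB0 : ∀ p, 0 ≤ B p := fun p => SB_nonneg (hB p)
  have hBB0 : 0 ≤ BB := Finset.sum_nonneg fun p _ => hB0 p
  have hcb : ∀ l p, ‖c l p‖ ≤ (C * BB) * (1 + |l|) ^ K := by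
    intro l p
    by_cases hp : p ≤ Q
    · simp only [hc, hp, if_true]
      rw [norm_div, Complex.norm_natCast]
      have h1 : (1 : ℝ) ≤ p.factorial := by exact_mod_cast Nat.one_le_iff_ne_zero.2 (Nat.factorial_ne_zero p)
      have h2 := hb _ _ (hmlB l p)
      have h3 : B p ≤ BB := Finset.single_le_sum (f := B) (fun i _ => hB0 i) (by simp; omega)
      calc _ ≤ ‖α (ml l p)‖ := div_le_self (norm_nonneg _) h1
        _ ≤ C * ((1 + |l|) ^ K * B p) := h2
        _ ≤ C * ((1 + |l|) ^ K * BB) := by gcongr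
        _ = _ := by ring
    · simp only [hc, hp, if_false, norm_zero]; positivity
  -- local claim
  have hloc : ∀ l ∈ TDsupport α, ∀ ψ : SchwartzMap ℝ ℂ, (∀ x ∈ tsupport ψ, x ∈ TDsupport α → x = l) →
      α ψ = TT Q c l ψ := by
    intro l hl ψ hψ
    have hts : ∀ p, tsupport (ml l p) ⊆ Metric.closedBall l (δ / 2) := by
      intro p
      refine closure_minimal (fun x hx => ?_) Metric.isClosed_closedBall
      by_contra hxx
      rw [Metric.mem_closedBall, Real.dist_eq, not_le] at hxx
      apply hx
      rw [hml_coe, hm]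
      simp [hχ0 _ hxx.le]
    set P : SchwartzMap ℝ ℂ := ∑ p ∈ Finset.range (Q + 1), (iteratedDeriv p ψ l / p.factorial) • ml l p with hP
    have hPc : ⇑P = fun x => ∑ p ∈ Finset.range (Q + 1), (iteratedDeriv p ψ l / p.factorial) * ml l p x := by
      ext x
      simp [hP]
    have hPt : ∀ x, δ / 2 < |x - l| → P x = 0 := by
      intro x hx
      rw [hPc]
      refine Finset.sum_eq_zero fun p _ => ?_
      rw [hml_coe, hm]
      simp [hχ0 _ hx.le]
    have hz : α (ψ - P) = 0 := by
      refine vanish_jet α hC hb (ψ - P) l ?_ ?_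
      · intro x hx hxα
        by_contra hne
        have h1 := hsep x hxα l hl hne
        have h2 : x ∉ tsupport ψ := fun h => hne (hψ x h hxα)
        rw [notMem_tsupport_iff_eventuallyEq] at h2
        have h3 : ⇑(ψ - P) =ᶠ[nhds x] 0 := by
          have : ∀ᶠ y in nhds x, δ / 2 < |y - l| := by
            have : Continuous fun y : ℝ => |y - l| := by fun_prop
            exact (this.tendsto x).eventually (lt_mem_nhds (by linarith))
          filter_upwards [this, h2] with y hy hy2
          simp [hPt y hy, hy2]
        exact (notMem_tsupport_iff_eventuallyEq.2 h3) hx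
      · intro j hj
        have : ⇑(ψ - P) = ⇑ψ - ⇑P := by ext; simp
        rw [this, iteratedDeriv_sub ((ψ.smooth _).contDiffAt) ((P.smooth _).contDiffAt), hPc,
          iteratedDeriv_fun_sum (fun i _ => (contDiff_const.mul ((ml l i).smooth _)).contDiffAt)]
        have : ∀ p ∈ Finset.range (Q + 1), iteratedDeriv j (fun x => iteratedDeriv p ψ l / p.factorial * ml l p x) l
            = if j = p then iteratedDeriv j ψ l else 0 := by
          intro p _
          rw [iteratedDeriv_const_mul_field, hml_coe, iter_comp_sub, sub_self, hmj]
          split_ifs with h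
          · subst h
            rw [div_mul_cancel₀]
            exact_mod_cast Nat.factorial_ne_zero j
          · simp
        rw [Finset.sum_congr rfl this, Finset.sum_ite_eq]
        simp [Nat.lt_succ_of_le hj]
    rw [map_sub, sub_eq_zero] at hz
    rw [hz, hP, map_sum]
    unfold TT
    refine Finset.sum_congr rfl fun p hp => ?_
    have : p ≤ Q := by simp at hp; omega
    simp only [hc, this, if_true, map_smul, smul_eq_mul]
    ring
  -- finite sums
  have hfin : ∀ s : Finset ℝ, (∀ l ∈ s, l ∈ TDsupport α) → ∀ ψ : SchwartzMap ℝ ℂ,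
      (∀ x ∈ tsupport ψ, x ∈ TDsupport α → x ∈ s) → α ψ = ∑ l ∈ s, TT Q c l ψ := by
    intro s
    induction s using Finset.induction_on with
    | empty =>
      intro _ ψ h
      rw [Finset.sum_empty]
      exact kills_of_disjoint (Set.disjoint_left.2 fun x hx hx2 => by simpa using h x hx hx2)
    | insert l s hls ih =>
      intro hs ψ hψ
      have hl : l ∈ TDsupport α := hs l (by simp)
      set f : ℝ → ℂ := fun x => χ (x - l) with hf
      have hfs : ContDiff ℝ (⊤ : ℕ∞) f := hχs.comp (contDiff_id.sub contDiff_const)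
      have hfc : HasCompactSupport f := hχc.comp_homeomorph (Homeomorph.subRight l)
      have hf1 : ∀ᶠ y in nhds l, f y = 1 := by
        have : ∀ᶠ y in nhds l, |y - l| < δ / 4 := by
          have : Continuous fun y : ℝ => |y - l| := by fun_prop
          exact (this.tendsto l).eventually (gt_mem_nhds (by simpa using hδ))
        filter_upwards [this] with y hy using hχ1 _ hy
      have hf0 : ∀ x ∈ TDsupport α, x ≠ l → ∀ᶠ y in nhds x, f y = 0 := by
        intro x hx hxl
        have h1 := hsep x hx l hl hxl
        have : ∀ᶠ y in nhds x, δ / 2 < |y - l| := by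
          have : Continuous fun y : ℝ => |y - l| := by fun_prop
          exact (this.tendsto x).eventually (lt_mem_nhds (by linarith))
        filter_upwards [this] with y hy using hχ0 _ hy.le
      obtain ⟨ψ1, e1⟩ := exists_schwartz (f := f * ψ) hfc.mul_right (hfs.mul (smoothS ψ))
      have e2 : ⇑(ψ - ψ1) = (1 - f) * ψ := by
        ext y
        simp [e1]; ring
      have g1 : α ψ1 = TT Q c l ψ := by
        rw [hloc l hl ψ1, TT_congr]
        · filter_upwards [hf1] with y hy
          simp [e1, hy]
        · intro x hx hxα
          by_contra hne
          have : ⇑ψ1 =ᶠ[nhds x] 0 := by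
            filter_upwards [hf0 x hxα hne] with y hy
            simp [e1, hy]
          exact (notMem_tsupport_iff_eventuallyEq.2 this) hx
      have g2 : α (ψ - ψ1) = ∑ l ∈ s, TT Q c l ψ := by
        rw [ih (fun l hl => hs l (by simp [hl])) (ψ - ψ1)]
        · refine Finset.sum_congr rfl fun k hk => TT_congr ?_
          have hkl : k ≠ l := fun h => hls (h ▸ hk)
          filter_upwards [hf0 k (hs k (by simp [hk])) hkl] with y hy
          rw [e2]; simp [hy]
        · intro x hx hxα
          have hxl : x ≠ l := by
            rintro rfl
            have : ⇑(ψ - ψ1) =ᶠ[nhds x] 0 := by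
              filter_upwards [hf1] with y hy
              rw [e2]; simp [hy]
            exact (notMem_tsupport_iff_eventuallyEq.2 this) hx
          rw [e2] at hx
          have := hψ x (tsupport_mul_subset_right hx) hxα
          simpa [hxl] using this
      rw [Finset.sum_insert hls, ← g1, ← g2, map_sub]; ring
  have hcs : ∀ ψ : SchwartzMap ℝ ℂ, HasCompactSupport ψ →
      HasSum (fun l : TDsupport α => TT Q c l ψ) (α ψ) := by
    intro ψ hψ
    have hf : (tsupport ψ ∩ TDsupport α).Finite := by
      obtain ⟨R, hR⟩ := hψ.isBounded.subset_closedBall 0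
      have := (sep_count hδ hsep (-|R|) |R| (by linarith [abs_nonneg R])).1
      refine this.subset fun x hx => ⟨hx.2, ?_⟩
      have := hR hx.1
      rw [Metric.mem_closedBall, dist_zero_right, Real.norm_eq_abs] at this
      exact abs_le.1 (this.trans (le_abs_self R))
    have hfin' := hfin hf.toFinset (fun l hl => by simp at hl; exact hl.2) ψ (fun x hx hx2 => by simp [hx, hx2])
    rw [hfin']
    classical
    have e : ∑ l ∈ hf.toFinset, TT Q c l ψ = ∑ l ∈ hf.toFinset.subtype (· ∈ TDsupport α), TT Q c l ψ := by
      rw [Finset.sum_subtype_of_mem (f := fun l => TT Q c l ψ)]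
      intro x hx; simp at hx; exact hx.2
    rw [e]
    apply hasSum_sum_of_ne_finset_zero
    intro l hl
    have h2 : (l : ℝ) ∉ tsupport ψ := by
      intro h
      apply hl
      simp [h]
    rw [notMem_tsupport_iff_eventuallyEq] at h2
    rw [TT_congr h2]
    unfold TT
    refine Finset.sum_eq_zero fun p _ => ?_
    have : (0 : ℝ → ℂ) = fun _ => 0 := rfl
    rw [this]
    simp
  have hS := sep_summable hδ hsep
  have hSB : ∀ φ : SchwartzMap ℝ ℂ, ∀ D, SB (K + 2) Q φ D → ∀ l : TDsupport α,
      ‖TT Q c l φ‖ ≤ ((Q + 1) * (C * BB) * D) * ((1 + |(l : ℝ)|) ^ 2)⁻¹ := by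
    intro φ D hD l
    have := TT_bound (Q := Q) (hcb l) (f := φ) (w := D / (1 + |(l : ℝ)|) ^ (K + 2)) (fun j hj => by
      rw [le_div_iff₀ (by positivity), mul_comm]; exact hD j hj l)
    refine this.trans (le_of_eq ?_)
    rw [pow_add]
    field_simp
  have hsm : ∀ φ : SchwartzMap ℝ ℂ, Summable (fun l : TDsupport α => TT Q c l φ) := by
    intro φ
    obtain ⟨D, hD⟩ := exists_SB φ (K + 2) Q
    exact Summable.of_norm_bounded (hS.mul_left _) (hSB φ D hD)
  set S := ∑' l : TDsupport α, ((1 + |(l : ℝ)|) ^ 2)⁻¹ with hSdef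
  have hS0 : 0 ≤ S := tsum_nonneg fun l => by positivity
  have hall : ∀ φ : SchwartzMap ℝ ℂ, HasSum (fun l : TDsupport α => TT Q c l φ) (α φ) := by
    intro φ
    have key : ∀ ε > 0, ‖α φ - ∑' l : TDsupport α, TT Q c l φ‖ ≤ (C + (Q + 1) * (C * BB) * S) * ε := by
      intro ε hε
      obtain ⟨ψ, p1, p2, p3⟩ := exists_cutoff φ (K + 2) Q hε
      have q1 : ‖α (φ - ψ)‖ ≤ C * ε := by
        apply hb
        intro j hj x
        refine le_trans ?_ (p3 j hj x)
        gcongr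
        · linarith [abs_nonneg x]
        · omega
      have q2 : ‖∑' l : TDsupport α, TT Q c l (φ - ψ : SchwartzMap ℝ ℂ)‖ ≤ ((Q + 1) * (C * BB) * ε) * S := by
        rw [hSdef, ← tsum_mul_left]
        exact tsum_of_norm_bounded (hS.mul_left _).hasSum (hSB _ ε p3)
      have q3 : α φ - ∑' l : TDsupport α, TT Q c l φ = α (φ - ψ) - ∑' l : TDsupport α, TT Q c l (φ - ψ : SchwartzMap ℝ ℂ) := by
        simp_rw [TT_sub]
        rw [(hsm φ).tsum_sub (hsm ψ), map_sub, (hcs ψ p1).tsum_eq]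
        ring
      rw [q3]
      refine (norm_sub_le _ _).trans ?_
      linarith
    have h0 : ‖α φ - ∑' l : TDsupport α, TT Q c l φ‖ ≤ 0 := by
      refine le_of_forall_pos_le_add fun ε hε => ?_
      have hA : 0 ≤ (C + (Q + 1) * (C * BB) * S) := by positivity
      refine (key (ε / ((C + (Q + 1) * (C * BB) * S) + 1)) (by positivity)).trans ?_
      rw [zero_add, mul_div_assoc', div_le_iff₀ (by positivity)]
      nlinarith
    have := sub_eq_zero.1 (norm_le_zero_iff.1 h0)
    rw [this]
    exact (hsm φ).hasSum
  refine ⟨⟨Q, K, C * BB, c, by positivity, hcb, hall, ?_⟩⟩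
  intro l hl
  by_contra hcon
  push Not at hcon
  have hl' := hl
  obtain ⟨φ, hφ, hφ2⟩ := hl (Metric.ball l δ) Metric.isOpen_ball (Metric.mem_ball_self hδ)
  apply hφ2
  rw [hloc l hl' φ]
  · unfold TT
    refine Finset.sum_eq_zero fun p hp => ?_
    rw [hcon p (by simp at hp; omega), zero_mul]
  · intro x hx hxα
    by_contra hne
    have h1 := hφ hx
    rw [Metric.mem_ball, Real.dist_eq] at h1
    linarith [hsep x hxα l hl' hne]

/-- character -/
def ee (ξ x : ℝ) : ℂ := cexp (((-2 * Real.pi * ξ * x : ℝ) : ℂ) * I)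

abbrev FT : SchwartzMap ℝ ℂ →L[ℂ] SchwartzMap ℝ ℂ := SchwartzMap.fourierTransformCLM ℂ

lemma FT_apply (ψ : SchwartzMap ℝ ℂ) (x : ℝ) : FT ψ x = ∫ v, ee v x * ψ v := by
  change FourierTransform.fourier (ψ : ℝ → ℂ) x = _
  rw [Real.fourier_real_eq_integral_exp_smul]
  rfl

lemma ee_norm (ξ x : ℝ) : ‖ee ξ x‖ = 1 := by
  unfold ee; exact Complex.norm_exp_ofReal_mul_I _

lemma ee_ne (ξ x : ℝ) : ee ξ x ≠ 0 := Complex.exp_ne_zero _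

lemma ee_add_left (a b x : ℝ) : ee (a + b) x = ee a x * ee b x := by
  unfold ee; rw [← Complex.exp_add]; congr 1; push_cast; ring

lemma ee_add_right (ξ a b : ℝ) : ee ξ (a + b) = ee ξ a * ee ξ b := by
  unfold ee; rw [← Complex.exp_add]; congr 1; push_cast; ring

lemma ee_conj (ξ x : ℝ) : (starRingEnd ℂ) (ee ξ x) = ee ξ (-x) := by
  unfold ee; rw [← Complex.exp_conj]; congr 1; rw [map_mul, Complex.conj_ofReal, Complex.conj_I]; push_cast; ring

lemma ee_smooth (ξ : ℝ) : ContDiff ℝ (⊤ : ℕ∞) (ee ξ) := by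
  unfold ee
  refine Complex.contDiff_exp.comp ?_ |>.of_le le_rfl
  refine ContDiff.mul ?_ contDiff_const
  exact Complex.ofRealCLM.contDiff.comp (contDiff_const.mul contDiff_id)

lemma ee_cont2 (x : ℝ) : Continuous (fun ξ => ee ξ x) := by
  unfold ee; fun_prop

lemma ee_iter (ξ : ℝ) (j : ℕ) : iteratedDeriv j (ee ξ) = fun x => (-2 * Real.pi * I * ξ) ^ j * ee ξ x := by
  induction j with
  | zero => ext x; simp
  | succ j ih =>
    rw [iteratedDeriv_succ, ih]
    ext x
    have h : HasDerivAt (ee ξ) ((-2 * Real.pi * I * ξ) * ee ξ x) x := by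
      have h1 : HasDerivAt (fun x : ℝ => (((-2 * Real.pi * ξ * x : ℝ) : ℂ)) * I) (((-2 * Real.pi * ξ : ℝ) : ℂ) * I) x := by
        have := ((hasDerivAt_id x).const_mul (-2 * Real.pi * ξ)).ofReal_comp.mul_const I
        simpa using this
      refine h1.cexp.congr_deriv ?_
      unfold ee; push_cast; ring
    rw [(h.const_mul _).deriv, pow_succ]; ring

lemma FT_shift (ψ : SchwartzMap ℝ ℂ) (ξ x : ℝ) :
    FT (SchwartzMap.compSubConstCLM ℂ ξ ψ) x = ee ξ x * FT ψ x := by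
  rw [FT_apply, FT_apply, ← integral_const_mul]
  rw [← integral_add_right_eq_self _ ξ]
  congr 1; ext v
  rw [SchwartzMap.compSubConstCLM_apply, add_sub_cancel_right, ee_add_left]; ring

lemma FT_FT (ψ : SchwartzMap ℝ ℂ) (x : ℝ) : FT (FT ψ) x = ψ (-x) := by
  have h : FourierTransformInv.fourierInv (FourierTransform.fourier ψ) = ψ := FourierTransform.fourierInv_fourier_eq ψ
  have h2 : (FourierTransformInv.fourierInv (FourierTransform.fourier ψ)) (-x) = ψ (-x) := by rw [h]
  rw [SchwartzMap.fourierInv_coe, Real.fourierInv_eq_fourier_neg, neg_neg] at h2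
  exact h2

lemma FT_surj (φ : SchwartzMap ℝ ℂ) : ∃ ψ, FT ψ = φ :=
  ⟨FourierTransformInv.fourierInv φ, by rw [SchwartzMap.fourierTransformCLM_apply]; exact FourierTransform.fourier_fourierInv_eq φ⟩

/-- band-limited functions -/
def BL (η : ℝ) (φ : SchwartzMap ℝ ℂ) : Prop := ∃ ψ, FT ψ = φ ∧ tsupport ψ ⊆ Set.Icc (-η) η

lemma tsupport_shift {ψ : SchwartzMap ℝ ℂ} {η : ℝ} (h : tsupport ψ ⊆ Set.Icc (-η) η) (ξ : ℝ) :
    tsupport (SchwartzMap.compSubConstCLM ℂ ξ ψ) ⊆ Set.Icc (ξ - η) (ξ + η) := by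
  refine closure_minimal (fun x hx => ?_) isClosed_Icc
  have : x - ξ ∈ tsupport ψ := subset_tsupport _ (by simpa using hx)
  have := h this
  exact ⟨by linarith [this.1], by linarith [this.2]⟩

lemma BL_mod {η : ℝ} {φ : SchwartzMap ℝ ℂ} (h : BL η φ) (ξ : ℝ) : ∃ Φ : SchwartzMap ℝ ℂ,
    ⇑Φ = ee ξ * φ ∧
    (∀ α : TemperedDist, Disjoint (Set.Icc (ξ - η) (ξ + η)) (TDsupport (fourierTD α)) → α Φ = 0) ∧
    (∀ α : TemperedDist, Disjoint (Set.Icc (-ξ - η) (-ξ + η)) (TDsupport α) → fourierTD α Φ = 0) := by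
  obtain ⟨ψ, rfl, hψ⟩ := h
  refine ⟨FT (SchwartzMap.compSubConstCLM ℂ ξ ψ), ?_, ?_, ?_⟩
  · ext x; rw [FT_shift]; rfl
  · intro α hd
    change fourierTD α (SchwartzMap.compSubConstCLM ℂ ξ ψ) = 0
    exact kills_of_disjoint (hd.mono_left (tsupport_shift hψ ξ))
  · intro α hd
    change α (FT (FT (SchwartzMap.compSubConstCLM ℂ ξ ψ))) = 0
    refine kills_of_disjoint (hd.mono_left ?_)
    refine closure_minimal (fun x hx => ?_) isClosed_Icc
    rw [Function.mem_support, FT_FT] at hx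
    have := tsupport_shift hψ ξ (subset_tsupport _ hx)
    exact ⟨by linarith [this.2], by linarith [this.1]⟩

/-! TT on modulated functions -/

lemma TT_mod_bound {Q M : ℕ} {C : ℝ} {c : ℝ → ℕ → ℂ} {l : ℝ} (hc : ∀ p, ‖c l p‖ ≤ C * (1 + |l|) ^ M) {f : ℝ → ℂ}
    (hf : ContDiff ℝ (⊤ : ℕ∞) f) {w : ℝ} (hw : ∀ j ≤ Q, ‖iteratedDeriv j f l‖ ≤ w) (ξ : ℝ) :
    ‖TT Q c l (ee ξ * f)‖ ≤ (Q + 1) * (C * (1 + |l|) ^ M * ((1 + 2 * Real.pi * |ξ|) ^ Q * w)) := by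
  apply TT_bound hc
  intro j hj
  have hw0 : 0 ≤ w := (norm_nonneg _).trans (hw 0 (Nat.zero_le _))
  have hpi := Real.pi_pos
  have := leib_bound (ee_smooth ξ) hf (Q := Q) (x := l) (B1 := 2 * Real.pi * |ξ|) (B2 := 1) (w1 := 1) (w2 := w)
    (by positivity) zero_le_one (fun j _ => by
      rw [ee_iter]
      simp only [norm_mul, norm_pow, ee_norm]
      simp [abs_of_pos hpi]) (fun j hj => by simpa using hw j hj) j hj
  refine this.trans ?_
  rw [one_mul, add_comm (2 * Real.pi * |ξ|) 1]
  gcongr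
  have : 0 ≤ 2 * Real.pi * |ξ| := by positivity
  linarith

lemma TT_mod_poly (Q : ℕ) (c : ℝ → ℕ → ℂ) (l : ℝ) {f : ℝ → ℂ} (hf : ContDiff ℝ (⊤ : ℕ∞) f) :
    ∃ P : Polynomial ℂ, ∀ ξ : ℝ, TT Q c l (ee ξ * f) = ee ξ l * P.eval (ξ : ℂ) := by
  refine ⟨∑ p ∈ Finset.range (Q + 1), ∑ i ∈ Finset.range (p + 1),
    Polynomial.C (c l p * (p.choose i) * (-2 * Real.pi * I) ^ i * iteratedDeriv (p - i) f l) * Polynomial.X ^ i, fun ξ => ?_⟩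
  unfold TT
  rw [Polynomial.eval_finsetSum, Finset.mul_sum]
  refine Finset.sum_congr rfl fun p _ => ?_
  rw [iteratedDeriv_mul ((ee_smooth ξ).of_le (by exact_mod_cast le_top)).contDiffAt
    ((hf.of_le (by exact_mod_cast le_top)).contDiffAt), Polynomial.eval_finsetSum, Finset.mul_sum, Finset.mul_sum]
  refine Finset.sum_congr rfl fun i _ => ?_
  rw [ee_iter]
  simp only [Polynomial.eval_mul, Polynomial.eval_C, Polynomial.eval_pow, Polynomial.eval_X]
  rw [mul_pow _ (ξ : ℂ)]
  ring

lemma TT_mod_top {Q : ℕ} {c : ℝ → ℕ → ℂ} {l : ℝ} {f : ℝ → ℂ} (hf : ContDiff ℝ (⊤ : ℕ∞) f) {p0 : ℕ} (hp0 : p0 ≤ Q)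
    (hc : ∀ p ≤ Q, p0 < p → c l p = 0) (h0 : ∀ j < p0, iteratedDeriv j f l = 0) (ξ : ℝ) :
    TT Q c l (ee ξ * f) = c l p0 * iteratedDeriv p0 f l * ee ξ l := by
  have hval : ∀ p ≤ p0, iteratedDeriv p (ee ξ * f) l = if p = p0 then iteratedDeriv p0 f l * ee ξ l else 0 := by
    intro p hp
    rw [iteratedDeriv_mul ((ee_smooth ξ).of_le (by exact_mod_cast le_top)).contDiffAt
      ((hf.of_le (by exact_mod_cast le_top)).contDiffAt)]
    rw [Finset.sum_eq_single 0]
    · split_ifs with h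
      · subst h; simp [mul_comm]
      · rw [Nat.sub_zero, h0 p (by omega)]; simp
    · intro i hi hi0
      rw [h0 (p - i) (by simp at hi; omega)]; simp
    · simp
  unfold TT
  rw [Finset.sum_eq_single p0]
  · rw [hval p0 le_rfl]; simp; ring
  · intro p hp hne
    have : p ≤ Q := by simp at hp; omega
    rcases lt_or_gt_of_ne hne with h | h
    · rw [hval p h.le]; simp [hne]
    · rw [hc p this h]; simp
  · intro h; exact absurd (by simp; omega) h

/-- functions which are Fourier transforms of a Schwartz function supported in `V` -/
def FSp (V : Set ℝ) (f : ℝ → ℂ) : Prop := ∃ ψ : SchwartzMap ℝ ℂ, ⇑(FT ψ) = f ∧ tsupport ψ ⊆ V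

lemma BL_of_FSp {η : ℝ} {φ : SchwartzMap ℝ ℂ} (h : FSp (Set.Icc (-η) η) φ) : BL η φ := by
  obtain ⟨ψ, h1, h2⟩ := h
  exact ⟨ψ, DFunLike.coe_injective h1, h2⟩

lemma FSp.mono {V W : Set ℝ} {f : ℝ → ℂ} (h : FSp V f) (hVW : V ⊆ W) : FSp W f := by
  obtain ⟨ψ, h1, h2⟩ := h
  exact ⟨ψ, h1, h2.trans hVW⟩

lemma FT_deriv (ψ : SchwartzMap ℝ ℂ) (x : ℝ) :
    FT (SchwartzMap.derivCLM ℂ ℂ ψ) x = (2 * Real.pi * I * x) * FT ψ x := by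
  change FourierTransform.fourier (deriv ψ) x = (2 * Real.pi * I * x) * FourierTransform.fourier (ψ : ℝ → ℂ) x
  rw [Real.fourier_deriv ψ.integrable ψ.differentiable (SchwartzMap.derivCLM ℂ ℂ ψ).integrable]
  simp

lemma FSp_lin {V : Set ℝ} {f : ℝ → ℂ} (h : FSp V f) (a b : ℂ) : FSp V (fun x => (a + b * x) * f x) := by
  obtain ⟨ψ, rfl, h2⟩ := h
  refine ⟨a • ψ + (b / (2 * Real.pi * I)) • SchwartzMap.derivCLM ℂ ℂ ψ, ?_, ?_⟩
  · ext x
    rw [map_add, map_smul, map_smul, SchwartzMap.add_apply, SchwartzMap.smul_apply, SchwartzMap.smul_apply, FT_deriv]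
    have : (Real.pi : ℂ) ≠ 0 := by exact_mod_cast Real.pi_ne_zero
    have := Complex.I_ne_zero
    simp only [smul_eq_mul]
    field_simp
  · refine closure_minimal (fun x hx => ?_) (isClosed_tsupport ψ) |>.trans h2
    by_contra hn
    apply hx
    rw [SchwartzMap.add_apply, SchwartzMap.smul_apply, SchwartzMap.smul_apply, SchwartzMap.derivCLM_apply,
      image_eq_zero_of_notMem_tsupport hn]
    have : deriv ψ x = 0 := by
      by_contra h
      exact hn (support_deriv_subset h)
    simp [this]

lemma FSp_add {V : Set ℝ} (hV : IsClosed V) {f g : ℝ → ℂ} (hf : FSp V f) (hg : FSp V g) : FSp V (f + g) := by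
  obtain ⟨ψ, rfl, h1⟩ := hf
  obtain ⟨χ, rfl, h2⟩ := hg
  refine ⟨ψ + χ, by rw [map_add]; rfl, ?_⟩
  refine closure_minimal (fun x hx => ?_) hV
  by_contra hn
  apply hx
  rw [SchwartzMap.add_apply, image_eq_zero_of_notMem_tsupport (fun h => hn (h1 h)),
    image_eq_zero_of_notMem_tsupport (fun h => hn (h2 h)), add_zero]

lemma FSp_poly {V : Set ℝ} (hV : IsClosed V) {f : ℝ → ℂ} (h : FSp V f) (P : Polynomial ℂ) :
    FSp V (fun x => P.eval (x : ℂ) * f x) := by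
  induction P using Polynomial.induction_on with
  | C a => simpa using FSp_lin h a 0
  | add p q hp hq =>
    convert FSp_add hV hp hq using 1
    ext x; simp [add_mul]
  | monomial n a ih =>
    convert FSp_lin ih 0 1 using 1
    ext x
    simp [pow_succ]; ring

lemma FSp_mul {a b : ℝ} {f g : ℝ → ℂ} (hf : FSp (Set.Icc (-a) a) f) (hg : FSp (Set.Icc (-b) b) g) :
    FSp (Set.Icc (-(a + b)) (a + b)) (f * g) := by
  obtain ⟨ψ, rfl, h1⟩ := hf
  obtain ⟨χ, rfl, h2⟩ := hg
  refine ⟨SchwartzMap.convolution (ContinuousLinearMap.mul ℂ ℂ) ψ χ, ?_, ?_⟩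
  · ext x
    rw [SchwartzMap.fourierTransformCLM_apply, SchwartzMap.fourier_convolution]
    simp
  · refine closure_minimal (fun x hx => ?_) isClosed_Icc
    rw [Function.mem_support, SchwartzMap.convolution_apply] at hx
    obtain ⟨u, hu, v, hv, rfl⟩ := support_convolution_subset _ hx
    have hu := h1 (subset_tsupport _ hu)
    have hv := h2 (subset_tsupport _ hv)
    exact ⟨by linarith [hu.1, hv.1], by linarith [hu.2, hv.2]⟩

lemma FSp_trans {η : ℝ} {f : ℝ → ℂ} (h : FSp (Set.Icc (-η) η) f) (l : ℝ) :
    FSp (Set.Icc (-η) η) (fun x => f (x - l)) := by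
  obtain ⟨ψ, rfl, h2⟩ := h
  have hsup : tsupport (fun v => ee (-l) v * ψ v) ⊆ Set.Icc (-η) η := (tsupport_mul_subset_right).trans h2
  obtain ⟨χ, hχ⟩ := exists_schwartz (f := fun v => ee (-l) v * ψ v)
    (isCompact_Icc.of_isClosed_subset (isClosed_tsupport _) hsup) ((ee_smooth (-l)).mul (smoothS ψ))
  refine ⟨χ, ?_, by rw [hχ]; exact hsup⟩
  ext x
  rw [FT_apply, FT_apply]
  congr 1; ext v
  rw [hχ, sub_eq_add_neg, ee_add_right, mul_assoc]
  congr 2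
  unfold ee; congr 1; push_cast; ring

lemma FT_scale (ψ : SchwartzMap ℝ ℂ) {s : ℝ} (hs : 0 < s) {χ : SchwartzMap ℝ ℂ}
    (hχ : ∀ v, χ v = (s⁻¹ : ℝ) * ψ (s⁻¹ * v)) (x : ℝ) : FT χ x = FT ψ (s * x) := by
  rw [FT_apply, FT_apply]
  have := MeasureTheory.Measure.integral_comp_mul_left (fun v => ee v (s * x) * ψ v) s⁻¹
  have h2 : ∀ v, ee v x * χ v = (s⁻¹ : ℝ) • (ee (s⁻¹ * v) (s * x) * ψ (s⁻¹ * v)) := by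
    intro v
    rw [hχ]
    have : ee (s⁻¹ * v) (s * x) = ee v x := by
      unfold ee; congr 3; field_simp
    rw [this, Complex.real_smul]; ring
  simp_rw [h2]
  rw [integral_smul, this, inv_inv, abs_of_pos hs, smul_smul, inv_mul_cancel₀ hs.ne', one_smul]

/-- base kernel -/
lemma exists_base : ∃ g : SchwartzMap ℝ ℂ, g 0 = 1 ∧ ∀ s > 0, FSp (Set.Icc (-s) s) (fun x => g (s * x)) := by
  let b : ContDiffBump (0 : ℝ) := ⟨1/2, 1, by norm_num, by norm_num⟩
  have hsm : ContDiff ℝ (⊤ : ℕ∞) (fun x => ((b.normed volume x : ℝ) : ℂ)) :=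
    Complex.ofRealCLM.contDiff.comp b.contDiff_normed
  have hts : tsupport (fun x => ((b.normed volume x : ℝ) : ℂ)) ⊆ Set.Icc (-1) 1 := by
    refine closure_minimal (fun x hx => ?_) isClosed_Icc
    have : x ∈ tsupport (b.normed volume) := subset_tsupport _ (by
      intro h; apply hx; simp [h])
    rw [b.tsupport_normed_eq, Real.closedBall_eq_Icc] at this
    simpa [b] using this
  obtain ⟨ψ, hψ⟩ := exists_schwartz (isCompact_Icc.of_isClosed_subset (isClosed_tsupport _) hts) hsm
  refine ⟨FT ψ, ?_, ?_⟩
  · rw [FT_apply, hψ]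
    have : ∀ v, ee v 0 = 1 := by intro v; simp [ee]
    simp_rw [this, one_mul]
    rw [integral_complex_ofReal, b.integral_normed]; simp
  · intro s hs
    have hsup : tsupport (fun v => ((s⁻¹ : ℝ) : ℂ) * ψ (s⁻¹ * v)) ⊆ Set.Icc (-s) s := by
      refine closure_minimal (fun x hx => ?_) isClosed_Icc
      have : s⁻¹ * x ∈ tsupport ψ := subset_tsupport _ (by
        intro h; apply hx; simp [h])
      rw [hψ] at this
      have := hts this
      rw [inv_mul_eq_div, Set.mem_Icc, le_div_iff₀ hs, div_le_iff₀ hs] at this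
      exact ⟨by linarith [this.1], by linarith [this.2]⟩
    obtain ⟨χ, hχ⟩ := exists_schwartz (f := fun v => ((s⁻¹ : ℝ) : ℂ) * ψ (s⁻¹ * v))
      (isCompact_Icc.of_isClosed_subset (isClosed_tsupport _) hsup)
      (contDiff_const.mul ((smoothS ψ).comp (contDiff_const.mul contDiff_id)))
    refine ⟨χ, ?_, by rw [hχ]; exact hsup⟩
    ext x
    exact FT_scale ψ hs (fun v => by rw [hχ]) x

lemma FSp_pow {s : ℝ} {f : ℝ → ℂ} (h : FSp (Set.Icc (-s) s) f) (m : ℕ) (hm : 1 ≤ m) :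
    FSp (Set.Icc (-(m * s)) (m * s)) (f ^ m) := by
  induction m, hm using Nat.le_induction with
  | base => simpa using h
  | succ m hm ih =>
    rw [pow_succ]
    convert FSp_mul ih h using 2 <;> push_cast <;> ring

/-- derivative bounds at a point -/
structure DB (Q : ℕ) (x B w : ℝ) (f : ℝ → ℂ) : Prop where
  sm : ContDiff ℝ (⊤ : ℕ∞) f
  hB : 0 ≤ B
  hw : 0 ≤ w
  bd : ∀ j ≤ Q, ‖iteratedDeriv j f x‖ ≤ B ^ j * w

lemma DB.mul {Q : ℕ} {x B1 B2 w1 w2 : ℝ} {f g : ℝ → ℂ} (hf : DB Q x B1 w1 f) (hg : DB Q x B2 w2 g) :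
    DB Q x (B1 + B2) (w1 * w2) (f * g) :=
  ⟨hf.sm.mul hg.sm, add_nonneg hf.hB hg.hB, mul_nonneg hf.hw hg.hw,
    leib_bound hf.sm hg.sm hf.hB hf.hw hf.bd hg.bd⟩

lemma DB_one (Q : ℕ) (x : ℝ) : DB Q x 0 1 (1 : ℝ → ℂ) := by
  refine ⟨contDiff_const, le_rfl, zero_le_one, fun j _ => ?_⟩
  have : iteratedDeriv j (1 : ℝ → ℂ) x = if j = 0 then 1 else 0 := iteratedDeriv_const
  rw [this]
  split_ifs with h
  · simp [h]
  · simp [h]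

lemma DB.pow {Q : ℕ} {x B w : ℝ} {f : ℝ → ℂ} (hf : DB Q x B w f) (n : ℕ) : DB Q x (n * B) (w ^ n) (f ^ n) := by
  induction n with
  | zero => simpa using DB_one Q x
  | succ n ih =>
    rw [pow_succ, pow_succ]
    convert ih.mul hf using 1
    push_cast; ring

lemma DB.prod {Q : ℕ} {x B : ℝ} {w : ℝ → ℝ} {f : ℝ → ℝ → ℂ} (Z : Finset ℝ) (hf : ∀ z ∈ Z, DB Q x B (w z) (f z)) :
    DB Q x (Z.card * B) (∏ z ∈ Z, w z) (∏ z ∈ Z, f z) := by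
  classical
  induction Z using Finset.induction_on with
  | empty => simpa using DB_one Q x
  | insert a s ha ih =>
    rw [Finset.prod_insert ha, Finset.prod_insert ha, Finset.card_insert_of_notMem ha]
    convert (hf a (by simp)).mul (ih (fun z hz => hf z (by simp [hz]))) using 1
    push_cast; ring

lemma iter_lin (a b : ℂ) (j : ℕ) (x : ℝ) : iteratedDeriv j (fun y : ℝ => a + b * y) x =
    if j = 0 then a + b * x else if j = 1 then b else 0 := by
  have hd : deriv (fun y : ℝ => a + b * (y : ℂ)) = fun _ => b := by
    ext y
    have := ((Complex.ofRealCLM.hasDerivAt (x := y)).const_mul b).const_add a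
    simpa using this.deriv
  match j with
  | 0 => simp
  | 1 => rw [iteratedDeriv_one, hd]; simp
  | j + 2 =>
    rw [iteratedDeriv_succ', iteratedDeriv_succ', hd]
    simp

lemma DB_lin {Q : ℕ} {x w : ℝ} {a b : ℂ} (h0 : ‖a + b * x‖ ≤ w) (h1 : ‖b‖ ≤ w) :
    DB Q x 1 w (fun y : ℝ => a + b * y) := by
  have hw : 0 ≤ w := (norm_nonneg _).trans h1
  refine ⟨contDiff_const.add (contDiff_const.mul Complex.ofRealCLM.contDiff), zero_le_one, hw, fun j _ => ?_⟩
  rw [iter_lin]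
  split_ifs <;> simpa

lemma zero_order (a : ℝ) (k : ℕ) {h : ℝ → ℂ} (hh : ContDiff ℝ (⊤ : ℕ∞) h) :
    (∀ j < k, iteratedDeriv j (fun y : ℝ => ((y : ℂ) - a) ^ k * h y) a = 0) ∧
    iteratedDeriv k (fun y : ℝ => ((y : ℂ) - a) ^ k * h y) a = k.factorial * h a := by
  have hs : ContDiff ℝ (⊤ : ℕ∞) (fun y : ℝ => ((y : ℂ) - a) ^ k) :=
    (Complex.ofRealCLM.contDiff.sub contDiff_const).pow k
  have hp : ∀ j, iteratedDeriv j (fun y : ℝ => ((y : ℂ) - a) ^ k) a = if j = k then (k.factorial : ℂ) else 0 := by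
    intro j
    have := iter_comp_sub (fun x : ℝ => (x : ℂ) ^ k) a j a
    rw [sub_self, iter_pow_zero] at this
    rw [← this]; congr 1; ext y; push_cast; rfl
  have key : ∀ j, iteratedDeriv j (fun y : ℝ => ((y : ℂ) - a) ^ k * h y) a =
      ∑ i ∈ Finset.range (j + 1), (j.choose i : ℂ) * (if i = k then (k.factorial : ℂ) else 0) * iteratedDeriv (j - i) h a := by
    intro j
    have := iteratedDeriv_mul (n := j) (x := a) (hs.of_le (by exact_mod_cast le_top)).contDiffAt
      ((hh.of_le (by exact_mod_cast le_top)).contDiffAt)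
    simp only [hp] at this
    exact this
  constructor
  · intro j hj
    rw [key]
    refine Finset.sum_eq_zero fun i hi => ?_
    rw [if_neg (by have := Finset.mem_range.1 hi; omega)]; simp
  · rw [key, Finset.sum_eq_single k]
    · simp
    · intro b _ hb; simp [hb]
    · simp

lemma prod_sep {δ : ℝ} (hδ : 0 < δ) (n : ℕ) : ∀ Z : Finset ℝ, Z.card = n → (0 : ℝ) ∉ Z → USep δ (insert 0 (Z : Set ℝ)) →
    (δ / 2) ^ n * n.factorial ≤ ∏ z ∈ Z, |z| := by
  induction n with
  | zero => intro Z hZ _ _; rw [Finset.card_eq_zero] at hZ; simp [hZ]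
  | succ n ih =>
    intro Z hZ h0 hs
    have hne : Z.Nonempty := by rw [← Finset.card_pos]; omega
    obtain ⟨z, hz, hmax⟩ := Z.exists_max_image (fun z => |z|) hne
    have hcount := (sep_count hδ hs (-|z|) |z| (by linarith [abs_nonneg z])).2
    have hsub : (insert 0 (Z : Set ℝ)) ∩ Set.Icc (-|z|) |z| = ((insert 0 Z : Finset ℝ) : Set ℝ) := by
      push_cast
      apply Set.inter_eq_left.2
      intro y hy
      rcases hy with rfl | hy
      · simp
      · exact abs_le.1 (hmax y hy)
    rw [hsub, Set.ncard_coe_finset, Finset.card_insert_of_notMem h0, hZ] at hcount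
    have hz2 : δ / 2 * (n + 1) ≤ |z| := by
      push_cast at hcount
      have : (n : ℝ) + 1 ≤ (|z| - -|z|) / δ := by linarith
      rw [le_div_iff₀ hδ] at this
      linarith
    have := ih (Z.erase z) (by rw [Finset.card_erase_of_mem hz, hZ]; rfl) (by simp [h0])
      (fun x hx y hy => hs x (by
        rcases hx with h | h
        · exact Or.inl h
        · right; exact Finset.mem_of_mem_erase h) y (by
        rcases hy with h | h
        · exact Or.inl h
        · right; exact Finset.mem_of_mem_erase h))
    rw [← Finset.mul_prod_erase _ _ hz, Nat.factorial_succ, pow_succ]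
    push_cast
    calc (δ / 2) ^ n * (δ / 2) * ((n + 1) * n.factorial) = (δ / 2 * (n + 1)) * ((δ / 2) ^ n * n.factorial) := by ring
      _ ≤ _ := by gcongr

lemma pow_fact_le {Y : ℝ} {n N : ℕ} (hn : n ≤ N) (hN : 1 ≤ N) (hY : (N : ℝ) ≤ Y) :
    Y ^ n / n.factorial ≤ (3 * Y / N) ^ N := by
  have hN0 : (0 : ℝ) < N := by exact_mod_cast hN
  have h1 : (N : ℝ) ^ n / n.factorial ≤ Real.exp N := Real.pow_div_factorial_le_exp _ hN0.le n
  have h2 : Real.exp N ≤ 3 ^ N := by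
    have := Real.exp_one_lt_d9
    calc Real.exp N = Real.exp 1 ^ N := by rw [← Real.exp_nat_mul]; simp
      _ ≤ 3 ^ N := by gcongr; linarith
  have h3 : 1 ≤ Y / N := by rwa [le_div_iff₀ hN0, one_mul]
  calc Y ^ n / n.factorial = (Y / N) ^ n * ((N : ℝ) ^ n / n.factorial) := by
        rw [div_pow]; field_simp
    _ ≤ (Y / N) ^ N * 3 ^ N := by
        gcongr
        exact h1.trans h2
    _ = _ := by rw [← mul_pow]; ring

lemma exp_beats (A : ℝ) (k : ℕ) : ∃ N0 : ℕ, ∀ N ≥ N0, A * (N : ℝ) ^ k ≤ 2 ^ N := by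
  have h := tendsto_pow_const_div_const_pow_of_one_lt k (r := (2 : ℝ)) one_lt_two
  have h2 := h.const_mul A
  rw [mul_zero] at h2
  obtain ⟨N0, hN⟩ := eventually_atTop.1 (h2.eventually (gt_mem_nhds one_pos))
  refine ⟨N0, fun N hN' => ?_⟩
  have := (hN N hN').le
  rw [← mul_div_assoc, div_le_one (by positivity)] at this
  exact this

/-- the numeric estimate -/
lemma kernel_num {C δ η c r y : ℝ} {q N n : ℕ} {W : ℝ} (hC : 0 < C) (hδ : 0 < δ) (hη : 0 < η) (hq : 1 ≤ q)
    (hN : 1 ≤ N) (hc : c ≤ 1 / (192 * C ^ 2 * q ^ 2) * δ * η ^ 2) (hr : 0 < r) (hy : r ≤ y)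
    (hn : n ≤ N) (hN1 : (N : ℝ) ≤ 2 * (c * r)) (hN2 : (N : ℝ) ≤ 4 * r / δ) (hW0 : 0 ≤ W)
    (hW : W ≤ (4 * y / δ) ^ n / n.factorial) :
    W ^ q * (C * (2 * q * N) / (η * y)) ^ (2 * q * N) ≤ (r / (2 * y)) ^ (q * N) := by
  have hN0 : (0 : ℝ) < N := by exact_mod_cast hN
  have hq0 : (0 : ℝ) < q := by exact_mod_cast hq
  have hy0 : 0 < y := hr.trans_le hy
  have h1 : W ≤ (3 * (4 * y / δ) / N) ^ N := hW.trans (pow_fact_le hn hN (hN2.trans (by gcongr)))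
  have h2 : 3 * (4 * y / δ) / N * (C * (2 * q * N) / (η * y)) ^ 2 ≤ r / (2 * y) := by
    have e : 3 * (4 * y / δ) / N * (C * (2 * q * N) / (η * y)) ^ 2 = 48 * C ^ 2 * q ^ 2 / (δ * η ^ 2) * N / y := by
      field_simp; ring
    rw [e]
    have : 48 * C ^ 2 * q ^ 2 / (δ * η ^ 2) * N ≤ r / 2 := by
      calc 48 * C ^ 2 * q ^ 2 / (δ * η ^ 2) * N ≤ 48 * C ^ 2 * q ^ 2 / (δ * η ^ 2) * (2 * ((1 / (192 * C ^ 2 * q ^ 2) * δ * η ^ 2) * r)) := by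
            gcongr
            exact hN1.trans (by gcongr)
        _ = r / 2 := by field_simp; ring
    calc _ ≤ r / 2 / y := by gcongr
      _ = _ := by field_simp
  calc W ^ q * (C * (2 * q * N) / (η * y)) ^ (2 * q * N)
      ≤ ((3 * (4 * y / δ) / N) ^ N) ^ q * (C * (2 * q * N) / (η * y)) ^ (2 * q * N) := by gcongr
    _ = (3 * (4 * y / δ) / N * (C * (2 * q * N) / (η * y)) ^ 2) ^ (q * N) := by
        rw [mul_pow _ _ (q * N), ← pow_mul, ← pow_mul]; congr 2 <;> ring
    _ ≤ _ := by gcongr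

lemma kernel_num2 {Q M q N : ℕ} {c r y A : ℝ} (hq : 1 ≤ q) (hc : 0 < c) (hr : 0 < r) (hy : r ≤ y) (hrA : 1 + A ≤ r) (hA : 0 ≤ A)
    (hNr : c * r ≤ N) (hN1 : 1 ≤ N) (hNb : Q + M ≤ N)
    (hN : ((Q + 3 * q : ℝ) ^ Q * 2 ^ M * (1 / c) ^ (Q + M + 1)) * (N : ℝ) ^ (Q + (Q + M + 1)) ≤ 2 ^ N) :
    (Q + 3 * q * N : ℝ) ^ Q * (y ^ Q * (r / (2 * y)) ^ (q * N)) ≤ (1 / r) * ((1 + A + y) ^ M)⁻¹ := by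
  have hy0 : 0 < y := hr.trans_le hy
  have hN0 : (1 : ℝ) ≤ N := by exact_mod_cast hN1
  have h1 : (r / (2 * y)) ^ (q * N) ≤ (r / y) ^ (Q + M) * (1 / 2) ^ N := by
    have hle : N ≤ q * N := Nat.le_mul_of_pos_left _ hq
    have e : r / (2 * y) = (r / y) * (1 / 2) := by field_simp
    have h01 : r / y ≤ 1 := by rwa [div_le_one hy0]
    calc (r / (2 * y)) ^ (q * N) ≤ (r / (2 * y)) ^ N := by
          apply pow_le_pow_of_le_one (by positivity) _ hle
          rw [e]; nlinarith [div_pos hr hy0]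
      _ = (r / y) ^ N * (1 / 2) ^ N := by rw [e, mul_pow]
      _ ≤ _ := by
          gcongr ?_ * _
          exact pow_le_pow_of_le_one (by positivity) h01 hNb
  have hrN : r ≤ 1 / c * N := by rw [one_div, inv_mul_eq_div, le_div_iff₀ hc]; linarith
  have hden : 0 < r * (1 + A + y) ^ M := by positivity
  have e2 : (1 / r) * ((1 + A + y) ^ M)⁻¹ = 1 / (r * (1 + A + y) ^ M) := by field_simp
  rw [e2, le_div_iff₀ hden]
  calc (Q + 3 * q * N : ℝ) ^ Q * (y ^ Q * (r / (2 * y)) ^ (q * N)) * (r * (1 + A + y) ^ M)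
      ≤ ((Q + 3 * q) * N : ℝ) ^ Q * (y ^ Q * ((r / y) ^ (Q + M) * (1 / 2) ^ N)) * (r * (2 * y) ^ M) := by
        gcongr
        · have : (0 : ℝ) ≤ Q := by positivity
          nlinarith
        · linarith
    _ = (Q + 3 * q : ℝ) ^ Q * 2 ^ M * r ^ (Q + M + 1) * N ^ Q * (1 / 2) ^ N := by
        rw [mul_pow, mul_pow, div_pow, pow_add y, pow_add r (Q + M)]; field_simp
    _ ≤ (Q + 3 * q : ℝ) ^ Q * 2 ^ M * (1 / c * N) ^ (Q + M + 1) * N ^ Q * (1 / 2) ^ N := by gcongr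
    _ = (((Q + 3 * q : ℝ) ^ Q * 2 ^ M * (1 / c) ^ (Q + M + 1)) * (N : ℝ) ^ (Q + (Q + M + 1))) * (1 / 2) ^ N := by
        rw [mul_pow (1 / c), pow_add (N : ℝ) Q]; ring
    _ ≤ 2 ^ N * (1 / 2) ^ N := by gcongr
    _ = 1 := by rw [← mul_pow]; norm_num

lemma iter_scale_bound {g : SchwartzMap ℝ ℂ} {Q : ℕ} {C : ℝ} (hg : ∀ j ≤ Q, ∀ u, |u| * ‖iteratedDeriv j g u‖ ≤ C)
    {s y : ℝ} (hs : 0 < s) (hs1 : s ≤ 1) (hy : 0 < |y|) : DB Q y 1 (C / (s * |y|)) (fun x => g (s * x)) := by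
  have hC : 0 ≤ C := le_trans (by positivity) (hg 0 (Nat.zero_le _) 0)
  refine ⟨(smoothS g).comp (contDiff_const.mul contDiff_id), zero_le_one, by positivity, fun j hj => ?_⟩
  rw [iter_comp_smul, norm_mul, norm_pow, Complex.norm_real, Real.norm_of_nonneg hs.le, one_pow, one_mul,
    le_div_iff₀ (by positivity)]
  have := hg j hj (s * y)
  rw [abs_mul, abs_of_pos hs] at this
  calc s ^ j * ‖iteratedDeriv j g (s * y)‖ * (s * |y|) = s ^ j * (s * |y| * ‖iteratedDeriv j g (s * y)‖) := by ring
    _ ≤ 1 * C := by gcongr; exact pow_le_one₀ hs.le hs1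
    _ = C := one_mul _

lemma kernel0 (Q : ℕ) : ∃ κ > (0 : ℝ), ∀ δ > (0 : ℝ), ∀ η > (0 : ℝ), ∀ c > (0 : ℝ), c ≤ 3 / δ → c ≤ κ * δ * η ^ 2 →
    ∀ (M : ℕ) (A : ℝ), 0 ≤ A → ∃ r0 : ℝ, 1 ≤ r0 ∧ ∀ r ≥ r0, ∀ p0 ≤ Q, ∀ Z : Finset ℝ, (∀ z ∈ Z, z ≠ 0 ∧ |z| ≤ r) →
    USep δ (insert 0 (Z : Set ℝ)) → (Z.card : ℝ) ≤ c * r →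
    ∃ f : ℝ → ℂ, FSp (Set.Icc (-η) η) f ∧ (∀ j < p0, iteratedDeriv j f 0 = 0) ∧ iteratedDeriv p0 f 0 = p0.factorial ∧
      (∀ z ∈ Z, ∀ j ≤ Q, iteratedDeriv j f z = 0) ∧
      ∀ y, r < |y| → ∀ j ≤ Q, ‖iteratedDeriv j f y‖ ≤ (1 / r) * ((1 + A + |y|) ^ M)⁻¹ := by
  obtain ⟨g, hg0, hg⟩ := exists_base
  obtain ⟨C', hC'⟩ := exists_SB g 1 Q
  have hC0 := SB_nonneg hC'
  set C := C' + 1 with hCdef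
  have hC : 0 < C := by positivity
  have hgC : ∀ j ≤ Q, ∀ u, |u| * ‖iteratedDeriv j g u‖ ≤ C := by
    intro j hj u
    have := hC' j hj u
    rw [pow_one] at this
    nlinarith [norm_nonneg (iteratedDeriv j g u), abs_nonneg u]
  set q := Q + 1 with hq
  refine ⟨1 / (192 * C ^ 2 * q ^ 2), by positivity, ?_⟩
  intro δ hδ η hη c hc hc1 hc2 M A hA
  obtain ⟨N1, hN1⟩ := exp_beats ((Q + 3 * q : ℝ) ^ Q * 2 ^ M * (1 / c) ^ (Q + M + 1)) (Q + (Q + M + 1))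
  refine ⟨1 + A + δ + (1 / c) * (1 + N1 + Q + M + η), by
    have : 0 ≤ (1 / c) * (1 + N1 + Q + M + η) := by positivity
    linarith, ?_⟩
  intro r hr p0 hp0 Z hZ hsep hcard
  have hpos : 0 ≤ (1 / c) * (1 + N1 + Q + M + η) := by positivity
  have hr1 : 1 + A ≤ r := by linarith
  have hrδ : δ ≤ r := by linarith
  have hr0 : 0 < r := by linarith
  have hcr : 1 + N1 + Q + M + η ≤ c * r := by
    have : (1 / c) * (1 + N1 + Q + M + η) ≤ r := by linarith
    rw [one_div, inv_mul_eq_div, div_le_iff₀ hc] at this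
    linarith
  set N := ⌈c * r⌉₊ with hNdef
  have hNge : c * r ≤ N := Nat.le_ceil _
  have hNlt : (N : ℝ) < c * r + 1 := Nat.ceil_lt_add_one (by positivity)
  have hNbig : 1 + N1 + Q + M ≤ N := by
    have : (1 + N1 + Q + M : ℝ) ≤ N := by linarith
    exact_mod_cast this
  have hN1' : 1 ≤ N := by omega
  have hNpos : (0 : ℝ) < N := by exact_mod_cast hN1'
  have hqpos : (1 : ℝ) ≤ q := by rw [hq]; push_cast; linarith [(Nat.cast_nonneg Q : (0:ℝ) ≤ Q)]
  have hcardN : Z.card ≤ N := by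
    have : (Z.card : ℝ) ≤ N := hcard.trans hNge
    exact_mod_cast this
  have hN2c : (N : ℝ) ≤ 2 * (c * r) := by
    have : (0 : ℝ) ≤ N1 + Q + M := by positivity
    linarith
  have hN4 : (N : ℝ) ≤ 4 * r / δ := by
    have h1 : c * r ≤ 3 / δ * r := by gcongr
    have h2 : 1 ≤ r / δ := by rwa [le_div_iff₀ hδ, one_mul]
    have e : 4 * r / δ = 3 / δ * r + r / δ := by ring
    linarith
  set m := 2 * q * N with hm
  have hm1 : 1 ≤ m := by rw [hm]; exact Nat.one_le_iff_ne_zero.2 (by positivity)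
  have hmpos : (0 : ℝ) < m := by exact_mod_cast hm1
  have hmη : η ≤ m := by
    have : (0 : ℝ) ≤ 1 + N1 + Q + M := by positivity
    have h2 : η ≤ N := by linarith
    rw [hm]; push_cast; nlinarith
  set s := η / m with hs
  have hspos : 0 < s := by positivity
  have hs1 : s ≤ 1 := by rw [hs, div_le_one hmpos]; exact hmη
  have hsm : ∀ z : ℝ, ContDiff ℝ (⊤ : ℕ∞) (fun y : ℝ => (1 : ℂ) + (-(1 / z) : ℂ) * y) := fun z =>
    contDiff_const.add (contDiff_const.mul Complex.ofRealCLM.contDiff)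
  have hgs : ContDiff ℝ (⊤ : ℕ∞) (fun x => g (s * x)) := (smoothS g).comp (contDiff_const.mul contDiff_id)
  have hprodsm : ∀ W : Finset ℝ, ContDiff ℝ (⊤ : ℕ∞) (∏ z ∈ W, (fun y : ℝ => (1 : ℂ) + (-(1 / z) : ℂ) * y) ^ q) := by
    intro W
    have : (∏ z ∈ W, (fun y : ℝ => (1 : ℂ) + (-(1 / z) : ℂ) * y) ^ q) =
        fun y => ∏ z ∈ W, ((fun y : ℝ => (1 : ℂ) + (-(1 / z) : ℂ) * y) ^ q) y := by ext y; simp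
    rw [this]
    exact contDiff_prod fun z _ => (hsm z).pow q
  set f : ℝ → ℂ := (fun y : ℝ => (0 : ℂ) + 1 * y) ^ p0 * (∏ z ∈ Z, (fun y : ℝ => (1 : ℂ) + (-(1 / z) : ℂ) * y) ^ q) *
    (fun x => g (s * x)) ^ m with hf
  refine ⟨f, ?_, ?_, ?_, ?_, ?_⟩
  · have h1 := FSp_pow (hg s hspos) m hm1
    have e : (m : ℝ) * s = η := by rw [hs]; field_simp
    rw [e] at h1
    convert FSp_poly isClosed_Icc h1 (Polynomial.X ^ p0 * ∏ z ∈ Z, (Polynomial.C 1 + Polynomial.C (-(1 / z) : ℂ) * Polynomial.X) ^ q) using 1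
    ext y
    simp [hf, Polynomial.eval_prod]
  · intro j hj
    have := (zero_order 0 p0 ((hprodsm Z).mul (hgs.pow m))).1 j hj
    convert this using 2
    ext y; simp [hf, mul_assoc]
  · have := (zero_order 0 p0 ((hprodsm Z).mul (hgs.pow m))).2
    convert this using 1
    · congr 1
      ext y; simp [hf, mul_assoc]
    · simp [hg0]
  · intro z hz j hj
    have hz0 : (z : ℂ) ≠ 0 := by exact_mod_cast (hZ z hz).1
    have h1 : ContDiff ℝ (⊤ : ℕ∞) (fun y : ℝ => (-(1 / z) : ℂ) ^ q * (((0 : ℂ) + 1 * y) ^ p0 *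
      ((∏ z ∈ Z.erase z, (fun y : ℝ => (1 : ℂ) + (-(1 / z) : ℂ) * y) ^ q) y * g (s * y) ^ m))) := by
      refine contDiff_const.mul (ContDiff.mul ?_ ((hprodsm (Z.erase z)).mul (hgs.pow m)))
      exact (contDiff_const.add (contDiff_const.mul Complex.ofRealCLM.contDiff)).pow _
    have := (zero_order z q h1).1 j (by omega)
    convert this using 2
    rw [hf, ← Finset.mul_prod_erase _ _ hz]
    ext y
    have e : (1 : ℂ) + (-(1 / z) : ℂ) * y = (y - z) * (-(1 / z)) := by field_simp; ring
    simp only [Pi.mul_apply, Pi.pow_apply]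
    rw [e, mul_pow]
    ring
  · intro y hy j hj
    have hy0 : 0 < |y| := hr0.trans hy
    have hy1 : 1 ≤ |y| := by linarith
    have d1 : DB Q y 1 |y| (fun y : ℝ => (0 : ℂ) + 1 * y) := DB_lin (by simp) (by simpa using hy1)
    have d2 : ∀ z ∈ Z, DB Q y 1 (2 * |y| / |z|) (fun y : ℝ => (1 : ℂ) + (-(1 / z) : ℂ) * y) := by
      intro z hz
      have hz0 : 0 < |z| := abs_pos.2 (hZ z hz).1
      have hzr := (hZ z hz).2
      refine DB_lin ?_ ?_
      · refine (norm_add_le _ _).trans ?_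
        rw [norm_mul, norm_neg, norm_div, norm_one, Complex.norm_real, Complex.norm_real, Real.norm_eq_abs, Real.norm_eq_abs,
          le_div_iff₀ hz0]
        field_simp
        linarith
      · rw [norm_neg, norm_div, norm_one, Complex.norm_real, Real.norm_eq_abs]
        gcongr
        linarith
    have d3 := iter_scale_bound hgC hspos hs1 hy0
    have d := (((d1.pow p0).mul (DB.prod Z (fun z hz => (d2 z hz).pow q))).mul (d3.pow m)).bd j hj
    refine d.trans ?_
    have hB : (p0 * 1 + Z.card * (q * 1) + m * 1 : ℝ) ≤ Q + 3 * q * N := by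
      have : (p0 : ℝ) ≤ Q := by exact_mod_cast hp0
      have h3 : (Z.card : ℝ) ≤ N := by exact_mod_cast hcardN
      have : (Z.card : ℝ) * q ≤ N * q := by gcongr
      rw [hm]; push_cast; linarith
    have hB1 : (1 : ℝ) ≤ Q + 3 * q * N := by
      have : (1 : ℝ) ≤ N := by exact_mod_cast hN1'
      have : (0 : ℝ) ≤ Q := by positivity
      nlinarith
    have hW : ∏ z ∈ Z, (2 * |y| / |z|) ≤ (4 * |y| / δ) ^ Z.card / Z.card.factorial := by
      have := prod_sep hδ Z.card Z rfl (fun h => (hZ 0 h).1 rfl) hsep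
      rw [Finset.prod_div_distrib, Finset.prod_const]
      have hpp : (0 : ℝ) < (δ / 2) ^ Z.card * Z.card.factorial := by positivity
      calc (2 * |y|) ^ Z.card / ∏ z ∈ Z, |z| ≤ (2 * |y|) ^ Z.card / ((δ / 2) ^ Z.card * Z.card.factorial) := by gcongr
        _ = _ := by
          rw [← div_div, ← div_pow]; congr 2; field_simp; ring
    have hnum := kernel_num (y := |y|) hC hδ hη (by omega : 1 ≤ q) hN1' hc2 hr0 hy.le hcardN hN2c hN4
      (Finset.prod_nonneg fun z _ => by positivity) hW
    have hmain := kernel_num2 (Q := Q) (M := M) (by omega : 1 ≤ q) hc hr0 hy.le hr1 hA hNge hN1' (by omega) (hN1 N (by omega))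
    refine le_trans ?_ hmain
    have es : C / (s * |y|) = C * (2 * q * N) / (η * |y|) := by
      rw [hs, hm]; push_cast; field_simp
    rw [es, Finset.prod_pow, mul_assoc (|y| ^ p0)]
    gcongr
    · calc (p0 * 1 + Z.card * (q * 1) + m * 1 : ℝ) ^ j ≤ (Q + 3 * q * N) ^ j := by gcongr
        _ ≤ _ := by gcongr

/-- translated kernel -/
lemma kernel (Q : ℕ) : ∃ κ > (0 : ℝ), ∀ δ > (0 : ℝ), ∀ η > (0 : ℝ), ∀ c > (0 : ℝ), c ≤ 3 / δ → c ≤ κ * δ * η ^ 2 →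
    ∀ (M : ℕ) (l : ℝ), ∃ r0 : ℝ, 1 ≤ r0 ∧ ∀ r ≥ r0, ∀ p0 ≤ Q, ∀ Z : Finset ℝ, (∀ z ∈ Z, z ≠ l ∧ |z - l| ≤ r) →
    USep δ (insert l (Z : Set ℝ)) → (Z.card : ℝ) ≤ c * r →
    ∃ φ : SchwartzMap ℝ ℂ, BL η φ ∧ (∀ j < p0, iteratedDeriv j φ l = 0) ∧ iteratedDeriv p0 φ l = p0.factorial ∧
      (∀ z ∈ Z, ∀ j ≤ Q, iteratedDeriv j φ z = 0) ∧
      ∀ x, r < |x - l| → ∀ j ≤ Q, ‖iteratedDeriv j φ x‖ ≤ (1 / r) * ((1 + |x|) ^ M)⁻¹ := by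
  obtain ⟨κ, hκ, h⟩ := kernel0 Q
  refine ⟨κ, hκ, fun δ hδ η hη c hc hc1 hc2 M l => ?_⟩
  obtain ⟨r0, hr1, h⟩ := h δ hδ η hη c hc hc1 hc2 M |l| (abs_nonneg _)
  refine ⟨r0, hr1, fun r hr p0 hp0 Z hZ hsep hcard => ?_⟩
  obtain ⟨f, hf1, hf2, hf3, hf4, hf5⟩ := h r hr p0 hp0 (Z.image (fun z => z - l)) (by
      intro z hz
      obtain ⟨w, hw, rfl⟩ := Finset.mem_image.1 hz
      exact ⟨sub_ne_zero.2 (hZ w hw).1, (hZ w hw).2⟩) (by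
      intro x hx y hy hxy
      have key : ∀ x, x ∈ insert 0 ((Z.image (fun z => z - l) : Finset ℝ) : Set ℝ) → x + l ∈ insert l (Z : Set ℝ) := by
        rintro x (rfl | hx)
        · left; simp
        · obtain ⟨w, hw, rfl⟩ := Finset.mem_image.1 (Finset.mem_coe.1 hx)
          right; simpa using hw
      have := hsep (x + l) (key x hx) (y + l) (key y hy) (fun h => hxy (by linarith))
      simpa using this) (le_trans (by exact_mod_cast Finset.card_image_le) hcard)
  obtain ⟨ψ, hψ, hψ2⟩ := FSp_trans hf1 l
  refine ⟨FT ψ, ⟨ψ, rfl, hψ2⟩, ?_, ?_, ?_, ?_⟩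
  · intro j hj; rw [hψ, iter_comp_sub, sub_self]; exact hf2 j hj
  · rw [hψ, iter_comp_sub, sub_self]; exact hf3
  · intro z hz j hj; rw [hψ, iter_comp_sub]; exact hf4 _ (Finset.mem_image_of_mem _ hz) j hj
  · intro x hx j hj
    rw [hψ, iter_comp_sub]
    refine (hf5 _ hx j hj).trans ?_
    have : |x| ≤ |l| + |x - l| := by
      have := abs_add_le l (x - l); simpa using this
    have hrp : 0 < r := by linarith
    have h3 : 1 + |x| ≤ 1 + |l| + |x - l| := by linarith
    gcongr

lemma SData.top {α : TemperedDist} (D : SData α) {l : ℝ} (hl : l ∈ TDsupport α) :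
    ∃ p0 ≤ D.Q, D.c l p0 ≠ 0 ∧ ∀ p ≤ D.Q, p0 < p → D.c l p = 0 := by
  classical
  obtain ⟨p, hp, hcp⟩ := D.hne l hl
  have hne : ((Finset.range (D.Q + 1)).filter (fun p => D.c l p ≠ 0)).Nonempty := ⟨p, by simp [hcp]; omega⟩
  refine ⟨Finset.max' _ hne, ?_, ?_, ?_⟩
  · have := Finset.max'_mem _ hne
    rw [Finset.mem_filter, Finset.mem_range] at this
    omega
  · exact (Finset.mem_filter.1 (Finset.max'_mem _ hne)).2
  · intro p hp hlt
    by_contra h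
    have := Finset.le_max' ((Finset.range (D.Q + 1)).filter (fun p => D.c l p ≠ 0)) p (by simp [h]; omega)
    omega

lemma hasSum_zero_bound {ι : Type*} {f : ι → ℂ} {b : ι → ℝ} (hf : HasSum f 0) (hb : Summable b) (hb0 : ∀ i, 0 ≤ b i)
    (i0 : ι) (h : ∀ i ≠ i0, ‖f i‖ ≤ b i) : ‖f i0‖ ≤ ∑' i, b i := by
  classical
  have h1 : HasSum (fun i => if i = i0 then f i0 else 0) (f i0) := by
    simpa using hasSum_ite_eq i0 (f i0)
  have h2 := h1.sub hf
  rw [sub_zero] at h2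
  refine h2.norm_le_of_bounded hb.hasSum fun i => ?_
  split_ifs with hi
  · subst hi; simpa using hb0 i
  · simpa using h i hi

lemma nonpos_of_div {a K r0 : ℝ} (h : ∀ r ≥ r0, a ≤ K / r) : a ≤ 0 := by
  have : Tendsto (fun r : ℝ => K / r) atTop (nhds 0) := tendsto_const_nhds.div_atTop tendsto_id
  exact ge_of_tendsto this (eventually_atTop.2 ⟨r0, h⟩)

lemma S_nonempty {α : TemperedDist} (h : (TDsupport α).Nonempty) : (TDsupport (fourierTD α)).Nonempty := by
  by_contra hS
  rw [Set.not_nonempty_iff_eq_empty] at hS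
  obtain ⟨x, hx⟩ := h
  obtain ⟨φ, -, hφ⟩ := hx Set.univ isOpen_univ trivial
  obtain ⟨ψ, rfl⟩ := FT_surj φ
  exact hφ (kills_of_disjoint (α := fourierTD α) (φ := ψ) (by rw [hS]; simp))

lemma decay_term {Q M : ℕ} {C r X l : ℝ} (hr : 0 < r) :
    ((Q + 1 : ℝ) * (C * (1 + |l|) ^ M * (X * ((1 / r) * ((1 + |l|) ^ (M + 2))⁻¹)))) =
      ((Q + 1) * C * X / r) * ((1 + |l|) ^ 2)⁻¹ := by
  have : 0 < 1 + |l| := by positivity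
  rw [pow_add]; field_simp

theorem rel_dense {α : TemperedDist} {δ : ℝ} (hδ : 0 < δ) (hS : USep δ (TDsupport (fourierTD α)))
    (hne : (TDsupport α).Nonempty) : ∃ R > 0, ∀ x : ℝ, ∃ l ∈ TDsupport α, |l - x| ≤ R := by
  classical
  obtain ⟨D⟩ := exists_SData (fourierTD α) hδ hS
  obtain ⟨s0, hs0⟩ := S_nonempty hne
  obtain ⟨p0, hp0, hcp, htop⟩ := D.top hs0
  obtain ⟨κ, hκ, hker⟩ := kernel D.Q
  set η := 1 + 3 / (κ * δ ^ 2) with hη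
  have hη1 : 1 ≤ η := by rw [hη]; have : 0 < 3 / (κ * δ ^ 2) := by positivity
                         linarith
  have hη0 : 0 < η := by linarith
  have hηc : 3 / δ ≤ κ * δ * η ^ 2 := by
    have h1 : 3 / (κ * δ ^ 2) ≤ η ^ 2 := by nlinarith [show 3 / (κ * δ ^ 2) ≤ η by rw [hη]; linarith]
    calc 3 / δ = κ * δ * (3 / (κ * δ ^ 2)) := by field_simp
      _ ≤ _ := by gcongr
  refine ⟨η, hη0, fun x => ?_⟩
  by_contra hcon
  push Not at hcon
  have hdisj : Disjoint (Set.Icc (-(-x) - η) (-(-x) + η)) (TDsupport α) := by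
    rw [Set.disjoint_left]
    rintro y ⟨h1, h2⟩ hy
    have := hcon y hy
    rw [neg_neg] at h1 h2
    exact absurd (abs_le.2 ⟨by linarith, by linarith⟩) (not_le.2 this)
  obtain ⟨r0, hr01, hker⟩ := hker δ hδ η hη0 (3 / δ) (by positivity) le_rfl hηc (D.M + 2) s0
  have hsummable := sep_summable hδ hS
  set T := ∑' l : TDsupport (fourierTD α), ((1 + |(l : ℝ)|) ^ 2)⁻¹ with hT
  set X := (1 + 2 * Real.pi * |-x|) ^ D.Q with hX
  have hX0 : 0 ≤ X := by have := Real.pi_pos; positivity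
  have hC := D.hC
  have key : ∀ r ≥ r0, ‖D.c s0 p0‖ * p0.factorial ≤ ((D.Q + 1) * D.C * X * T) / r := by
    intro r hr
    have hr0 : 0 < r := by linarith
    have hcnt := sep_count hδ hS (s0 - r) (s0 + r) (by linarith)
    set Z := hcnt.1.toFinset.erase s0 with hZ
    have hmemZ : ∀ z, z ∈ Z ↔ z ≠ s0 ∧ z ∈ TDsupport (fourierTD α) ∧ |z - s0| ≤ r := by
      intro z
      rw [hZ, Finset.mem_erase, Set.Finite.mem_toFinset, Set.mem_inter_iff, Set.mem_Icc, abs_le]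
      constructor
      · rintro ⟨a, b, c, d⟩; exact ⟨a, b, by linarith, by linarith⟩
      · rintro ⟨a, b, c, d⟩; exact ⟨a, b, by linarith, by linarith⟩
    have hs0mem : s0 ∈ hcnt.1.toFinset := by
      rw [Set.Finite.mem_toFinset]; exact ⟨hs0, by linarith, by linarith⟩
    have hcard : (Z.card : ℝ) ≤ 3 / δ * r := by
      have h1 := hcnt.2
      rw [Set.ncard_eq_toFinset_card _ hcnt.1, ← Finset.card_erase_add_one hs0mem] at h1
      push_cast at h1
      have : (Z.card : ℝ) ≤ (s0 + r - (s0 - r)) / δ := by linarith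
      refine this.trans ?_
      rw [show s0 + r - (s0 - r) = 2 * r by ring, div_mul_eq_mul_div]
      gcongr; linarith
    obtain ⟨φ, hBL, hφ0, hφp, hφZ, hφd⟩ := hker r hr p0 hp0 Z (fun z hz => ⟨((hmemZ z).1 hz).1, ((hmemZ z).1 hz).2.2⟩) (by
      have hsub : ∀ x ∈ insert s0 (Z : Set ℝ), x ∈ TDsupport (fourierTD α) := by
        rintro x (rfl | hx)
        · exact hs0
        · exact ((hmemZ x).1 hx).2.1
      exact fun x hx y hy => hS x (hsub x hx) y (hsub y hy)) hcard
    obtain ⟨Φ, hΦ, -, hΦ2⟩ := BL_mod hBL (-x)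
    have hsum := D.hsum Φ
    rw [hΦ2 α hdisj] at hsum
    have hb := hasSum_zero_bound hsum (hsummable.mul_left ((D.Q + 1) * D.C * X / r)) (fun i => by positivity) ⟨s0, hs0⟩ (by
      rintro ⟨s, hs⟩ hne
      have hne' : s ≠ s0 := fun h => hne (Subtype.ext h)
      simp only [hΦ]
      by_cases hin : |s - s0| ≤ r
      · have := TT_mod_bound (D.hc s) (smoothS φ) (w := 0) (fun j hj => by
          rw [hφZ s ((hmemZ s).2 ⟨hne', hs, hin⟩) j hj]; simp) (-x)
        refine this.trans ?_
        simp only [mul_zero]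
        positivity
      · have := TT_mod_bound (D.hc s) (smoothS φ) (hφd s (not_le.1 hin)) (-x)
        refine this.trans ?_
        rw [← hX, decay_term hr0])
    rw [tsum_mul_left, ← hT] at hb
    simp only [hΦ] at hb
    rw [TT_mod_top (smoothS φ) hp0 htop hφ0, hφp] at hb
    simp only [norm_mul, ee_norm, mul_one, Complex.norm_natCast] at hb
    calc _ ≤ _ := hb
      _ = _ := by ring
  have := nonpos_of_div key
  have h2 : 0 < ‖D.c s0 p0‖ * p0.factorial := mul_pos (norm_pos_iff.2 hcp) (by positivity)
  linarith

/-- pointwise decay -/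
def Dec (Q M : ℕ) (f : ℝ → ℂ) (B l : ℝ) : Prop := ∀ j ≤ Q, ‖iteratedDeriv j f l‖ ≤ B * ((1 + |l|) ^ (M + 2))⁻¹

lemma exists_Dec (Q M : ℕ) (φ : SchwartzMap ℝ ℂ) : ∃ B, 0 ≤ B ∧ ∀ l, Dec Q M φ B l := by
  obtain ⟨B, hB⟩ := exists_SB φ (M + 2) Q
  refine ⟨B, SB_nonneg hB, fun l j hj => ?_⟩
  rw [← div_eq_mul_inv, le_div_iff₀ (by positivity), mul_comm]
  exact hB j hj l

lemma TT_decay {α : TemperedDist} (D : SData α) {f : ℝ → ℂ} (hf : ContDiff ℝ (⊤ : ℕ∞) f) {B l : ℝ}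
    (h : Dec D.Q D.M f B l) (ξ : ℝ) :
    ‖TT D.Q D.c l (ee ξ * f)‖ ≤ ((D.Q + 1) * D.C * B * ((1 + |l|) ^ 2)⁻¹) * (1 + 2 * Real.pi * |ξ|) ^ D.Q := by
  refine (TT_mod_bound (D.hc l) hf h ξ).trans (le_of_eq ?_)
  have : 0 < 1 + |l| := by positivity
  rw [pow_add]; field_simp

/-- integrand -/
def JF {α : TemperedDist} (D : SData α) (k φ₁ φ₂ : SchwartzMap ℝ ℂ) (σ l l' ξ : ℝ) : ℂ :=
  k ξ * (TT D.Q D.c l (ee (ξ + σ) * φ₁) * (starRingEnd ℂ) (TT D.Q D.c l' (ee ξ * φ₂)))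

lemma poly_wt (σ ξ : ℝ) (Q : ℕ) : (1 + 2 * Real.pi * |ξ + σ|) ^ Q * (1 + 2 * Real.pi * |ξ|) ^ Q ≤
    ((1 + 2 * Real.pi) * (1 + |σ|)) ^ (2 * Q) * (1 + |ξ|) ^ (2 * Q) := by
  have hp := Real.pi_pos
  have hs := abs_nonneg σ
  have hx := abs_nonneg ξ
  have h0 : |ξ + σ| ≤ |ξ| + |σ| := abs_add_le _ _
  have h1 : 1 + 2 * Real.pi * |ξ + σ| ≤ ((1 + 2 * Real.pi) * (1 + |σ|)) * (1 + |ξ|) := by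
    nlinarith [mul_nonneg hs hx, mul_nonneg hp.le (mul_nonneg hs hx), mul_nonneg hp.le hs, mul_nonneg hp.le hx,
      mul_le_mul_of_nonneg_left h0 hp.le]
  have h2 : 1 + 2 * Real.pi * |ξ| ≤ ((1 + 2 * Real.pi) * (1 + |σ|)) * (1 + |ξ|) := by
    nlinarith [mul_nonneg hs hx, mul_nonneg hp.le (mul_nonneg hs hx), mul_nonneg hp.le hs, mul_nonneg hp.le hx]
  calc _ ≤ (((1 + 2 * Real.pi) * (1 + |σ|)) * (1 + |ξ|)) ^ Q * (((1 + 2 * Real.pi) * (1 + |σ|)) * (1 + |ξ|)) ^ Q := by gcongr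
    _ = _ := by rw [← pow_add, ← two_mul, mul_pow]

/-- weight -/
def JV (k : SchwartzMap ℝ ℂ) (σ : ℝ) (Q : ℕ) (ξ : ℝ) : ℝ :=
  ((1 + 2 * Real.pi) * (1 + |σ|)) ^ (2 * Q) * ((1 + |ξ|) ^ (2 * Q) * ‖k ξ‖)

lemma JV_integrable (k : SchwartzMap ℝ ℂ) (σ : ℝ) (Q : ℕ) : Integrable (JV k σ Q) := by
  refine Integrable.const_mul ?_ _
  have h0 : Integrable (fun ξ => ‖k ξ‖) volume := k.integrable.norm
  have h1 := SchwartzMap.integrable_pow_mul volume k (2 * Q)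
  refine ((h0.add h1).const_mul (2 ^ (2 * Q - 1))).mono' ?_ ?_
  · exact (by fun_prop : Continuous fun ξ => (1 + |ξ|) ^ (2 * Q) * ‖k ξ‖).aestronglyMeasurable
  · refine ae_of_all _ fun ξ => ?_
    rw [Real.norm_of_nonneg (by positivity)]
    have := add_pow_le (zero_le_one) (abs_nonneg ξ) (2 * Q)
    rw [one_pow] at this
    calc (1 + |ξ|) ^ (2 * Q) * ‖k ξ‖ ≤ (2 ^ (2 * Q - 1) * (1 + |ξ| ^ (2 * Q))) * ‖k ξ‖ := by gcongr
      _ = _ := by simp; ring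

lemma JF_bound {α : TemperedDist} (D : SData α) (k φ₁ φ₂ : SchwartzMap ℝ ℂ) (σ : ℝ) {l l' B₁ B₂ : ℝ} (hB1 : 0 ≤ B₁)
    (h1 : Dec D.Q D.M φ₁ B₁ l) (h2 : Dec D.Q D.M φ₂ B₂ l') (ξ : ℝ) :
    ‖JF D k φ₁ φ₂ σ l l' ξ‖ ≤ (((D.Q + 1) * D.C) ^ 2 * B₁ * B₂ * (((1 + |l|) ^ 2)⁻¹ * ((1 + |l'|) ^ 2)⁻¹)) * JV k σ D.Q ξ := by
  have hB2 : 0 ≤ B₂ := by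
    have := (norm_nonneg _).trans (h2 0 (Nat.zero_le _))
    exact nonneg_of_mul_nonneg_left this (by positivity)
  unfold JF
  rw [norm_mul, norm_mul, RCLike.norm_conj]
  have t1 := TT_decay D (smoothS φ₁) h1 (ξ + σ)
  have t2 := TT_decay D (smoothS φ₂) h2 ξ
  have hC := D.hC
  have hp := Real.pi_pos
  calc _ ≤ ‖k ξ‖ * ((((D.Q + 1) * D.C * B₁ * ((1 + |l|) ^ 2)⁻¹) * (1 + 2 * Real.pi * |ξ + σ|) ^ D.Q) *
        (((D.Q + 1) * D.C * B₂ * ((1 + |l'|) ^ 2)⁻¹) * (1 + 2 * Real.pi * |ξ|) ^ D.Q)) := by gcongr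
    _ = (((D.Q + 1) * D.C) ^ 2 * B₁ * B₂ * (((1 + |l|) ^ 2)⁻¹ * ((1 + |l'|) ^ 2)⁻¹)) *
        (((1 + 2 * Real.pi * |ξ + σ|) ^ D.Q * (1 + 2 * Real.pi * |ξ|) ^ D.Q) * ‖k ξ‖) := by ring
    _ ≤ (((D.Q + 1) * D.C) ^ 2 * B₁ * B₂ * (((1 + |l|) ^ 2)⁻¹ * ((1 + |l'|) ^ 2)⁻¹)) *
        ((((1 + 2 * Real.pi) * (1 + |σ|)) ^ (2 * D.Q) * (1 + |ξ|) ^ (2 * D.Q)) * ‖k ξ‖) := by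
        gcongr ?_ * (?_ * _); exact poly_wt σ ξ D.Q
    _ = _ := by unfold JV; ring

lemma JF_poly {α : TemperedDist} (D : SData α) (k φ₁ φ₂ : SchwartzMap ℝ ℂ) (σ l l' : ℝ) :
    ∃ R : Polynomial ℂ, ∀ ξ, JF D k φ₁ φ₂ σ l l' ξ = ee σ l * (ee ξ (l - l') * (R.eval (ξ : ℂ) * k ξ)) := by
  obtain ⟨P1, hP1⟩ := TT_mod_poly D.Q D.c l (smoothS φ₁)
  obtain ⟨P2, hP2⟩ := TT_mod_poly D.Q D.c l' (smoothS φ₂)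
  refine ⟨P1.comp (Polynomial.X + Polynomial.C (σ : ℂ)) * P2.map (starRingEnd ℂ), fun ξ => ?_⟩
  unfold JF
  have hconj : (starRingEnd ℂ) (P2.eval (ξ : ℂ)) = (P2.map (starRingEnd ℂ)).eval (ξ : ℂ) := by
    rw [Polynomial.eval_map, ← Polynomial.eval₂_hom, Complex.conj_ofReal]
  rw [hP1, hP2, map_mul, ee_conj, hconj, sub_eq_add_neg, ee_add_right, ee_add_left ξ σ]
  simp only [Polynomial.eval_mul, Polynomial.eval_comp, Polynomial.eval_add, Polynomial.eval_X, Polynomial.eval_C]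
  push_cast
  ring

lemma JF_cont {α : TemperedDist} (D : SData α) (k φ₁ φ₂ : SchwartzMap ℝ ℂ) (σ l l' : ℝ) :
    Continuous (JF D k φ₁ φ₂ σ l l') := by
  obtain ⟨R, hR⟩ := JF_poly D k φ₁ φ₂ σ l l'
  rw [funext hR]
  have := ee_cont2 (l - l')
  have h2 : Continuous fun ξ : ℝ => R.eval (ξ : ℂ) := R.continuous.comp Complex.continuous_ofReal
  have := k.continuous
  fun_prop

lemma JF_integrable {α : TemperedDist} (D : SData α) (k φ₁ φ₂ : SchwartzMap ℝ ℂ) (σ l l' : ℝ) :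
    Integrable (JF D k φ₁ φ₂ σ l l') := by
  obtain ⟨B1, hB1, h1⟩ := exists_Dec D.Q D.M φ₁
  obtain ⟨B2, hB2, h2⟩ := exists_Dec D.Q D.M φ₂
  exact ((JV_integrable k σ D.Q).const_mul _).mono' (JF_cont D k φ₁ φ₂ σ l l').aestronglyMeasurable
    (ae_of_all _ fun ξ => JF_bound D k φ₁ φ₂ σ hB1 (h1 l) (h2 l') ξ)

lemma J_bound {α : TemperedDist} (D : SData α) (k φ₁ φ₂ : SchwartzMap ℝ ℂ) (σ : ℝ) {l l' B₁ B₂ : ℝ} (hB1 : 0 ≤ B₁)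
    (h1 : Dec D.Q D.M φ₁ B₁ l) (h2 : Dec D.Q D.M φ₂ B₂ l') :
    ∫ ξ, ‖JF D k φ₁ φ₂ σ l l' ξ‖ ≤
      (((D.Q + 1) * D.C) ^ 2 * B₁ * B₂ * (((1 + |l|) ^ 2)⁻¹ * ((1 + |l'|) ^ 2)⁻¹)) * ∫ ξ, JV k σ D.Q ξ := by
  rw [← integral_const_mul]
  exact integral_mono (JF_integrable D k φ₁ φ₂ σ l l').norm ((JV_integrable k σ D.Q).const_mul _)
    (fun ξ => JF_bound D k φ₁ φ₂ σ hB1 h1 h2 ξ)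

lemma J_zero {α : TemperedDist} (D : SData α) {ψ : SchwartzMap ℝ ℂ} {V : Set ℝ} (hV : IsClosed V) (hψ : tsupport ψ ⊆ V)
    (φ₁ φ₂ : SchwartzMap ℝ ℂ) (σ : ℝ) {l l' : ℝ} (h : -(l - l') ∉ V) :
    ∫ ξ, JF D (FT ψ) φ₁ φ₂ σ l l' ξ = 0 := by
  obtain ⟨R, hR⟩ := JF_poly D (FT ψ) φ₁ φ₂ σ l l'
  simp_rw [hR]
  rw [integral_const_mul]
  obtain ⟨χ, hχ, hχ2⟩ := FSp_poly hV ⟨ψ, rfl, hψ⟩ R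
  have := FT_FT χ (l - l')
  rw [FT_apply, hχ, image_eq_zero_of_notMem_tsupport (fun hh => h (hχ2 hh))] at this
  rw [this, mul_zero]

lemma hasSum_mul_conj {ι : Type*} {f g : ι → ℂ} {a b x : ℂ} (hf : HasSum f a) (hg : HasSum g b)
    {u v : ι → ℝ} (hu : Summable u) (hv : Summable v) (hfu : ∀ i, ‖f i‖ ≤ u i) (hgv : ∀ i, ‖g i‖ ≤ v i) :
    HasSum (fun p : ι × ι => x * (f p.1 * (starRingEnd ℂ) (g p.2))) (x * (a * (starRingEnd ℂ) b)) := by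
  have n1 : Summable fun i => ‖f i‖ := Summable.of_nonneg_of_le (fun _ => norm_nonneg _) hfu hu
  have n2 : Summable fun i => ‖(starRingEnd ℂ) (g i)‖ := Summable.of_nonneg_of_le (fun _ => norm_nonneg _)
    (fun i => by rw [RCLike.norm_conj]; exact hgv i) hv
  have hg' : HasSum (fun i => (starRingEnd ℂ) (g i)) ((starRingEnd ℂ) b) := hg.map (starRingEnd ℂ) Complex.continuous_conj
  have hs : Summable (fun p : ι × ι => f p.1 * (starRingEnd ℂ) (g p.2)) :=
    summable_mul_of_summable_norm (f := f) (g := fun i => (starRingEnd ℂ) (g i)) n1 n2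
  have hp : HasSum (fun p : ι × ι => f p.1 * (starRingEnd ℂ) (g p.2)) (a * (starRingEnd ℂ) b) :=
    HasSum.mul (f := f) (g := fun i => (starRingEnd ℂ) (g i)) hf hg' hs
  exact hp.mul_left x

lemma J_hasSum {α : TemperedDist} (D : SData α) {δ : ℝ} (hδ : 0 < δ) (hs : USep δ (TDsupport α))
    (k : SchwartzMap ℝ ℂ) {η : ℝ} {φ₁ φ₂ : SchwartzMap ℝ ℂ} (hφ₁ : BL η φ₁) (hφ₂ : BL η φ₂) (σ : ℝ)
    (hdis : ∀ ξ, Disjoint (Set.Icc (ξ + σ - η) (ξ + σ + η)) (TDsupport (fourierTD α)) ∨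
      Disjoint (Set.Icc (ξ - η) (ξ + η)) (TDsupport (fourierTD α))) :
    HasSum (fun p : TDsupport α × TDsupport α => ∫ ξ, JF D k φ₁ φ₂ σ p.1 p.2 ξ) 0 := by
  have hsum := sep_summable hδ hs
  have hsum2 := hsum.mul_of_nonneg hsum (fun _ => by positivity) (fun _ => by positivity)
  have hcount : Countable (TDsupport α) := by
    have := hsum.countable_support
    have e : Function.support (fun l : TDsupport α => ((1 + |(l : ℝ)|) ^ 2)⁻¹) = Set.univ := by
      ext l
      have : 0 < ((1 + |(l : ℝ)|) ^ 2)⁻¹ := by positivity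
      simp only [Function.mem_support, Set.mem_univ, iff_true]
      exact this.ne'
    rw [e] at this
    exact Set.countable_univ_iff.1 this
  obtain ⟨B1, hB1, h1⟩ := exists_Dec D.Q D.M φ₁
  obtain ⟨B2, hB2, h2⟩ := exists_Dec D.Q D.M φ₂
  have hmain := hasSum_integral_of_summable_integral_norm (μ := volume)
    (F := fun (p : TDsupport α × TDsupport α) ξ => JF D k φ₁ φ₂ σ p.1 p.2 ξ)
    (fun p => JF_integrable D k φ₁ φ₂ σ p.1 p.2) (by
      refine Summable.of_nonneg_of_le (fun p => integral_nonneg fun _ => norm_nonneg _)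
        (fun p => J_bound D k φ₁ φ₂ σ hB1 (h1 p.1) (h2 p.2)) ?_
      exact (hsum2.mul_left _).mul_right _)
  have hz : ∀ ξ, ∑' p : TDsupport α × TDsupport α, JF D k φ₁ φ₂ σ p.1 p.2 ξ = 0 := by
    intro ξ
    obtain ⟨Φ1, hΦ1, hv1, -⟩ := BL_mod hφ₁ (ξ + σ)
    obtain ⟨Φ2, hΦ2, hv2, -⟩ := BL_mod hφ₂ ξ
    have s1 := D.hsum Φ1
    have s2 := D.hsum Φ2
    rw [hΦ1] at s1
    rw [hΦ2] at s2
    have s12 := hasSum_mul_conj (x := k ξ) s1 s2 ((hsum.mul_left _).mul_right _) ((hsum.mul_left _).mul_right _)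
      (fun l => TT_decay D (smoothS φ₁) (h1 l) (ξ + σ)) (fun l => TT_decay D (smoothS φ₂) (h2 l) ξ)
    have hzero : k ξ * (α Φ1 * (starRingEnd ℂ) (α Φ2)) = 0 := by
      rcases hdis ξ with h | h
      · rw [hv1 α h]; simp
      · rw [hv2 α h]; simp
    rw [hzero] at s12
    exact s12.tsum_eq
  simp_rw [hz] at hmain
  simpa using hmain

/-- approximate return set -/
def RS (Λ : Set ℝ) (h ε : ℝ) : Set ℝ := {x ∈ Λ | ∃ y ∈ Λ, |y - x - h| < ε}

lemma exists_bump_at (a ε : ℝ) (hε : 0 < ε) : ∃ ψ : SchwartzMap ℝ ℂ, ψ a = 1 ∧ tsupport ψ ⊆ Set.Icc (a - ε) (a + ε) := by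
  obtain ⟨X, hX1, hX2⟩ := exists_X
  have hts : tsupport (fun x => X (2 / ε * (x - a))) ⊆ Set.Icc (a - ε) (a + ε) := by
    refine closure_minimal (fun x hx => ?_) isClosed_Icc
    by_contra hn
    apply hx
    apply hX2
    have : ε < |x - a| := by
      by_contra hle
      rw [not_lt, abs_le] at hle
      exact hn ⟨by linarith [hle.1], by linarith [hle.2]⟩
    rw [abs_mul, abs_of_pos (by positivity), div_mul_eq_mul_div, le_div_iff₀ hε]
    linarith
  obtain ⟨ψ, hψ⟩ := exists_schwartz (f := fun x => X (2 / ε * (x - a)))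
    (isCompact_Icc.of_isClosed_subset (isClosed_tsupport _) hts)
    ((smoothS X).comp (contDiff_const.mul (contDiff_id.sub contDiff_const)))
  refine ⟨ψ, ?_, by rw [hψ]; exact hts⟩
  rw [hψ]; simp [hX1]

theorem density {α : TemperedDist} {δ δS : ℝ} (hδ : 0 < δ) (hδS : 0 < δS) (hΛ : USep δ (TDsupport α))
    (hS : USep δS (TDsupport (fourierTD α))) : ∃ c > (0 : ℝ), ∀ l0 ∈ TDsupport α, ∀ l1 ∈ TDsupport α,
    ∀ ε, 0 < ε → ε ≤ δ → ∃ r0 : ℝ, ∀ r ≥ r0,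
      c * r ≤ (RS (TDsupport α) (l1 - l0) ε ∩ Set.Icc (l0 - r) (l0 + r)).ncard := by
  classical
  obtain ⟨D⟩ := exists_SData α hδ hΛ
  obtain ⟨κ, hκ, hker⟩ := kernel D.Q
  set η := δS / 8 with hη
  set σ := δS / 2 with hσ
  have hη0 : 0 < η := by positivity
  set c := min (3 / δ) (κ * δ * η ^ 2) with hc
  have hc0 : 0 < c := lt_min (by positivity) (by positivity)
  refine ⟨c, hc0, fun l0 hl0 l1 hl1 ε hε hεδ => ?_⟩
  have hker := hker δ hδ η hη0 c hc0 (min_le_left _ _) (min_le_right _ _) (D.M + 2)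
  obtain ⟨p1, hp1, hcp1, htop1⟩ := D.top hl1
  obtain ⟨p0, hp0, hcp0, htop0⟩ := D.top hl0
  have hdis : ∀ ξ, Disjoint (Set.Icc (ξ + σ - η) (ξ + σ + η)) (TDsupport (fourierTD α)) ∨
      Disjoint (Set.Icc (ξ - η) (ξ + η)) (TDsupport (fourierTD α)) := by
    intro ξ
    by_contra hcon
    push Not at hcon
    obtain ⟨h1, h2⟩ := hcon
    rw [Set.not_disjoint_iff] at h1 h2
    obtain ⟨x, ⟨hx1, hx2⟩, hxS⟩ := h1
    obtain ⟨y, ⟨hy1, hy2⟩, hyS⟩ := h2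
    have := hS x hxS y hyS (fun h => by subst h; linarith)
    have h3 : |x - y| < δS := by rw [abs_lt]; constructor <;> linarith
    linarith
  -- first kernel
  obtain ⟨r1, hr1, hk1⟩ := hker l1
  obtain ⟨φ₁, hBL1, hφ10, hφ1p, -, -⟩ := hk1 r1 le_rfl p1 hp1 ∅ (by simp) (by
    intro x hx y hy hxy
    simp at hx hy
    exact absurd (hx.trans hy.symm) hxy) (by simp; positivity)
  obtain ⟨B1, hB1, hdec1⟩ := exists_Dec D.Q D.M φ₁
  obtain ⟨ψ, hψ1, hψs⟩ := exists_bump_at (-(l1 - l0)) (ε / 2) (by positivity)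
  obtain ⟨r2, hr2, hk2⟩ := hker l0
  have hsum := sep_summable hδ hΛ
  have hsum2 := hsum.mul_of_nonneg hsum (fun _ => by positivity) (fun _ => by positivity)
  set T := ∑' p : TDsupport α × TDsupport α, ((1 + |(p.1 : ℝ)|) ^ 2)⁻¹ * ((1 + |(p.2 : ℝ)|) ^ 2)⁻¹ with hT
  set W := ∫ ξ, JV (FT ψ) σ D.Q ξ with hW
  have hW0 : 0 ≤ W := integral_nonneg fun ξ => by unfold JV; have := Real.pi_pos; positivity
  set K := ((D.Q + 1) * D.C) ^ 2 * B1 * W * T with hK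
  set A := ‖D.c l1 p1‖ * p1.factorial * (‖D.c l0 p0‖ * p0.factorial) with hA
  have hA0 : 0 < A := by
    have := norm_pos_iff.2 hcp1
    have := norm_pos_iff.2 hcp0
    positivity
  have hT0 : 0 ≤ T := tsum_nonneg fun p => by positivity
  have hK0 : 0 ≤ K := by positivity
  refine ⟨max r2 (K / A + 1), fun r hr => ?_⟩
  have hrr2 : r2 ≤ r := (le_max_left _ _).trans hr
  have hrK : K / A + 1 ≤ r := (le_max_right _ _).trans hr
  have hr0 : 0 < r := by linarith
  by_contra hlt
  rw [not_le] at hlt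
  have hfin : (RS (TDsupport α) (l1 - l0) ε ∩ Set.Icc (l0 - r) (l0 + r)).Finite :=
    (sep_count hδ hΛ (l0 - r) (l0 + r) (by linarith)).1.subset (Set.inter_subset_inter_left _ (fun x hx => hx.1))
  set Z := hfin.toFinset.erase l0 with hZ
  have hmemZ : ∀ z, z ∈ Z ↔ z ≠ l0 ∧ z ∈ RS (TDsupport α) (l1 - l0) ε ∧ |z - l0| ≤ r := by
    intro z
    rw [hZ, Finset.mem_erase, Set.Finite.mem_toFinset, Set.mem_inter_iff, Set.mem_Icc, abs_le]
    constructor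
    · rintro ⟨a, b, c, d⟩; exact ⟨a, b, by linarith, by linarith⟩
    · rintro ⟨a, b, c, d⟩; exact ⟨a, b, by linarith, by linarith⟩
  have hcard : (Z.card : ℝ) ≤ c * r := by
    rw [Set.ncard_eq_toFinset_card _ hfin] at hlt
    have : (Z.card : ℝ) ≤ hfin.toFinset.card := by exact_mod_cast Finset.card_erase_le
    linarith
  obtain ⟨φ₂, hBL2, hφ20, hφ2p, hφ2Z, hφ2d⟩ := hk2 r hrr2 p0 hp0 Z (fun z hz => ⟨((hmemZ z).1 hz).1, ((hmemZ z).1 hz).2.2⟩) (by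
      have hsub : ∀ x ∈ insert l0 (Z : Set ℝ), x ∈ TDsupport α := by
        rintro x (rfl | hx)
        · exact hl0
        · exact ((hmemZ x).1 hx).2.1.1
      exact fun x hx y hy => hΛ x (hsub x hx) y (hsub y hy)) hcard
  have hJ := J_hasSum D hδ hΛ (FT ψ) hBL1 hBL2 σ hdis
  have hCC := D.hC
  have hb := hasSum_zero_bound hJ (hsum2.mul_left (((D.Q + 1) * D.C) ^ 2 * B1 * (1 / r) * W)) (fun i => by positivity)
    (⟨l1, hl1⟩, ⟨l0, hl0⟩) (by
      rintro ⟨⟨l, hl⟩, ⟨l', hl'⟩⟩ hne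
      simp only
      by_cases hin : |l - l' - (l1 - l0)| < ε
      · have hl'ne : l' ≠ l0 := by
          rintro rfl
          apply hne
          have : l = l1 := by
            by_contra hll
            have h2 := hΛ l hl l1 hl1 hll
            have e : l - l' - (l1 - l') = l - l1 := by ring
            rw [e] at hin
            linarith
          subst this
          rfl
        by_cases hin2 : |l' - l0| ≤ r
        · have hz : Dec D.Q D.M φ₂ 0 l' := fun j hj => by
            rw [hφ2Z l' ((hmemZ l').2 ⟨hl'ne, ⟨hl', l, hl, hin⟩, hin2⟩) j hj]; simp
          have := J_bound D (FT ψ) φ₁ φ₂ σ hB1 (hdec1 l) hz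
          refine (norm_integral_le_integral_norm _).trans (this.trans ?_)
          simp only [mul_zero, zero_mul]
          positivity
        · have hz : Dec D.Q D.M φ₂ (1 / r) l' := fun j hj => hφ2d l' (not_le.1 hin2) j hj
          have := J_bound D (FT ψ) φ₁ φ₂ σ hB1 (hdec1 l) hz
          refine (norm_integral_le_integral_norm _).trans (this.trans (le_of_eq ?_))
          rw [← hW]; ring
      · rw [J_zero D isClosed_Icc hψs φ₁ φ₂ σ (by
          rintro ⟨h1, h2⟩
          apply hin
          rw [abs_lt]; constructor <;> linarith)]
        rw [norm_zero]; positivity)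
  rw [tsum_mul_left, ← hT] at hb
  have hval : ∀ ξ, JF D (FT ψ) φ₁ φ₂ σ l1 l0 ξ =
      (D.c l1 p1 * p1.factorial * (starRingEnd ℂ) (D.c l0 p0 * p0.factorial) * ee σ l1) * (ee ξ (l1 - l0) * FT ψ ξ) := by
    intro ξ
    unfold JF
    rw [TT_mod_top (smoothS φ₁) hp1 htop1 hφ10, hφ1p, TT_mod_top (smoothS φ₂) hp0 htop0 hφ20, hφ2p, map_mul _ _ (ee ξ l0),
      ee_conj, sub_eq_add_neg, ee_add_right, ee_add_left ξ σ]
    ring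
  simp only [hval] at hb
  rw [integral_const_mul, ← FT_apply, FT_FT, hψ1, mul_one] at hb
  simp only [norm_mul, ee_norm, mul_one, RCLike.norm_conj, Complex.norm_natCast] at hb
  have hfinal : A ≤ K / r := by
    calc A ≤ _ := hb
      _ = K / r := by rw [hK]; ring
  rw [le_div_iff₀ hr0] at hfinal
  have : K / A < r := by linarith
  rw [div_lt_iff₀ hA0] at this
  linarith

/-- difference set -/
def Dif (Λ : Set ℝ) : Set ℝ := {d | ∃ x ∈ Λ, ∃ y ∈ Λ, d = y - x}

/-- centered density hypothesis -/
def CDen (Λ : Set ℝ) (δ c : ℝ) : Prop :=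
  ∀ h ∈ Dif Λ, ∀ ε, 0 < ε → ε ≤ δ → ∃ r0 : ℝ, ∀ r ≥ r0,
    c * r ≤ ((RS Λ h ε ∩ Set.Icc (-r) r).ncard : ℝ)

lemma cden_of {Λ : Set ℝ} {δ c : ℝ} (hδ : 0 < δ) (hc : 0 < c) (hsep : USep δ Λ)
    (hd : ∀ l0 ∈ Λ, ∀ l1 ∈ Λ, ∀ ε, 0 < ε → ε ≤ δ → ∃ r0 : ℝ, ∀ r ≥ r0,
      c * r ≤ ((RS Λ (l1 - l0) ε ∩ Set.Icc (l0 - r) (l0 + r)).ncard : ℝ)) :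
    CDen Λ δ (c / 2) := by
  rintro h ⟨x, hx, y, hy, rfl⟩ ε hε hεδ
  obtain ⟨r0, hr0⟩ := hd x hx y hy ε hε hεδ
  refine ⟨max (r0 + |x|) (2 * |x|), fun r hr => ?_⟩
  have h1 : r0 + |x| ≤ r := le_trans (le_max_left _ _) hr
  have h2 : 2 * |x| ≤ r := le_trans (le_max_right _ _) hr
  have h3 := hr0 (r - |x|) (by linarith)
  have habs := abs_nonneg x
  have hsub : RS Λ (y - x) ε ∩ Set.Icc (x - (r - |x|)) (x + (r - |x|)) ⊆
      RS Λ (y - x) ε ∩ Set.Icc (-r) r := by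
    apply Set.inter_subset_inter_right
    apply Set.Icc_subset_Icc
    · have := neg_abs_le x; linarith
    · have := le_abs_self x; linarith
  have hfin : (RS Λ (y - x) ε ∩ Set.Icc (-r) r).Finite :=
    (sep_count hδ hsep (-r) r (by linarith)).1.subset
      (Set.inter_subset_inter_left _ (fun z hz => hz.1))
  have h4 : ((RS Λ (y - x) ε ∩ Set.Icc (x - (r - |x|)) (x + (r - |x|))).ncard : ℝ) ≤
      ((RS Λ (y - x) ε ∩ Set.Icc (-r) r).ncard : ℝ) := by
    exact_mod_cast Set.ncard_le_ncard hsub hfin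
  nlinarith

lemma exists_gap (T : Finset ℝ) : ∃ ε > (0:ℝ), ∀ x ∈ T, ∀ y ∈ T, x ≠ y → ε ≤ |x - y| := by
  classical
  induction T using Finset.induction_on with
  | empty => exact ⟨1, one_pos, by simp⟩
  | insert a s ha ih =>
    obtain ⟨ε, hε, h⟩ := ih
    have : ∃ ε' > (0:ℝ), ∀ x ∈ s, ε' ≤ |a - x| := by
      by_cases hs : s.Nonempty
      · obtain ⟨m, hm, hmin⟩ := s.exists_min_image (fun x => |a - x|) hs
        refine ⟨|a - m|, abs_pos.2 (sub_ne_zero.2 ?_), hmin⟩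
        rintro rfl; exact ha hm
      · rw [Finset.not_nonempty_iff_eq_empty] at hs
        subst hs; exact ⟨1, one_pos, by simp⟩
    obtain ⟨ε', hε', h'⟩ := this
    refine ⟨min ε ε', lt_min hε hε', fun x hx y hy hxy => ?_⟩
    rw [Finset.mem_insert] at hx hy
    rcases hx with rfl | hx <;> rcases hy with rfl | hy
    · exact absurd rfl hxy
    · exact (min_le_right _ _).trans (h' y hy)
    · rw [abs_sub_comm]; exact (min_le_right _ _).trans (h' x hx)
    · exact (min_le_left _ _).trans (h x hx y hy hxy)

lemma dif_finset_count {Λ : Set ℝ} {δ c : ℝ} (hδ : 0 < δ) (hc : 0 < c) (hsep : USep δ Λ)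
    (hd : CDen Λ δ c) (a b : ℝ) (hab : a ≤ b) (T : Finset ℝ) (hT : ∀ h ∈ T, h ∈ Dif Λ)
    (hTI : ∀ h ∈ T, h ∈ Set.Icc a b) :
    (T.card : ℝ) ≤ ((2 / δ + 1) / c) * ((b - a) / δ + 3) := by
  classical
  obtain ⟨ε0, hε0, hgap⟩ := exists_gap T
  set ε := min (ε0 / 2) δ with hεdef
  have hε : 0 < ε := lt_min (by linarith) hδ
  have hεδ : ε ≤ δ := min_le_right _ _
  have hε2 : 2 * ε ≤ ε0 := by have := min_le_left (ε0 / 2) δ; linarith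
  have hr : ∃ r ≥ (1:ℝ), ∀ h ∈ T, c * r ≤ ((RS Λ h ε ∩ Set.Icc (-r) r).ncard : ℝ) := by
    have : ∀ h ∈ T, ∀ᶠ r in atTop, c * r ≤ ((RS Λ h ε ∩ Set.Icc (-r) r).ncard : ℝ) := by
      intro h hh
      obtain ⟨r0, h0⟩ := hd h (hT h hh) ε hε hεδ
      filter_upwards [eventually_ge_atTop r0] with r hr using h0 r hr
    have h2 := (Filter.eventually_all_finset T).2 this
    obtain ⟨r, h3, h4⟩ := ((eventually_ge_atTop (1:ℝ)).and h2).exists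
    exact ⟨r, h3, h4⟩
  obtain ⟨r, hr1, hr⟩ := hr
  obtain ⟨hXf, hXc⟩ := sep_count hδ hsep (-r) r (by linarith)
  set X := hXf.toFinset with hX
  have hXcard : (X.card : ℝ) ≤ 2 * r / δ + 1 := by
    rw [← Set.ncard_eq_toFinset_card _ hXf]
    refine hXc.trans (le_of_eq ?_); ring
  have hB : ∀ x ∈ X, ((T.filter (fun h => x ∈ RS Λ h ε)).card : ℝ) ≤ (b - a) / δ + 3 := by
    intro x hx
    obtain ⟨hYf, hYc⟩ := sep_count hδ hsep (x + a - ε) (x + b + ε) (by linarith)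
    have hch : ∀ h ∈ T.filter (fun h => x ∈ RS Λ h ε), ∃ y ∈ Λ, |y - x - h| < ε := by
      intro h hh
      exact (Finset.mem_filter.1 hh).2.2
    choose! y hy1 hy2 using hch
    have hcard : (T.filter (fun h => x ∈ RS Λ h ε)).card ≤ hYf.toFinset.card := by
      apply Finset.card_le_card_of_injOn y
      · intro h hh
        have h1 := hTI h (Finset.mem_filter.1 hh).1
        have h2 := abs_lt.1 (hy2 h hh)
        simp only [Set.Finite.coe_toFinset]
        refine ⟨hy1 h hh, ?_, ?_⟩ <;> linarith [h1.1, h1.2, h2.1, h2.2]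
      · intro h hh h' hh' heq
        by_contra hne
        have h1 := hgap h (Finset.mem_filter.1 hh).1 h' (Finset.mem_filter.1 hh').1 hne
        have h2 := abs_lt.1 (hy2 h hh)
        have h3 := abs_lt.1 (hy2 h' hh')
        rw [heq] at h2
        have : |h - h'| < 2 * ε := by rw [abs_lt]; constructor <;> linarith [h2.1, h2.2, h3.1, h3.2]
        linarith
    have h5 : ((T.filter (fun h => x ∈ RS Λ h ε)).card : ℝ) ≤ hYf.toFinset.card := by
      exact_mod_cast hcard
    rw [← Set.ncard_eq_toFinset_card _ hYf] at h5
    refine h5.trans (hYc.trans ?_)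
    have : (x + b + ε - (x + a - ε)) / δ = (b - a) / δ + 2 * (ε / δ) := by ring
    have h6 : ε / δ ≤ 1 := (div_le_one hδ).2 hεδ
    linarith
  have hdc := Finset.sum_card_bipartiteAbove_eq_sum_card_bipartiteBelow
    (s := T) (t := X) (fun h x => x ∈ RS Λ h ε)
  simp only [Finset.bipartiteAbove, Finset.bipartiteBelow] at hdc
  have hlow : (T.card : ℝ) * (c * r) ≤
      ((∑ h ∈ T, (X.filter (fun x => x ∈ RS Λ h ε)).card : ℕ) : ℝ) := by
    push_cast
    rw [← nsmul_eq_mul]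
    apply Finset.card_nsmul_le_sum
    intro h hh
    refine (hr h hh).trans (le_of_eq ?_)
    rw [← Set.ncard_coe_finset]
    congr 2
    ext x
    simp only [Finset.coe_filter, hX, Set.Finite.mem_toFinset, Set.mem_inter_iff, Set.mem_setOf_eq]
    constructor
    · rintro ⟨h1, h2⟩; exact ⟨⟨h1.1, h2⟩, h1⟩
    · rintro ⟨⟨_, h2⟩, h1⟩; exact ⟨h1, h2⟩
  have hup : ((∑ x ∈ X, (T.filter (fun h => x ∈ RS Λ h ε)).card : ℕ) : ℝ) ≤
      (2 * r / δ + 1) * ((b - a) / δ + 3) := by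
    push_cast
    refine (Finset.sum_le_card_nsmul _ _ _ hB).trans ?_
    rw [nsmul_eq_mul]
    apply mul_le_mul_of_nonneg_right hXcard
    have := div_nonneg (sub_nonneg.2 hab) hδ.le
    linarith
  rw [hdc] at hlow
  have h7 := hlow.trans hup
  have h8 : 2 * r / δ + 1 ≤ (2 / δ + 1) * r := by
    have : 2 * r / δ = 2 / δ * r := by ring
    rw [this]; nlinarith
  have hQ : 0 ≤ (b - a) / δ + 3 := by
    have := div_nonneg (sub_nonneg.2 hab) hδ.le
    linarith
  have h9 : (T.card : ℝ) * (c * r) ≤ (2 / δ + 1) * r * ((b - a) / δ + 3) :=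
    h7.trans (mul_le_mul_of_nonneg_right h8 hQ)
  rw [div_mul_eq_mul_div, le_div_iff₀ hc]
  have hr0 : 0 < r := by linarith
  refine le_of_mul_le_mul_right ?_ hr0
  calc (T.card : ℝ) * c * r = (T.card : ℝ) * (c * r) := by ring
    _ ≤ _ := h9
    _ = _ := by ring

lemma finite_of_card_le {α : Type*} (s : Set α) (N : ℝ)
    (h : ∀ T : Finset α, (↑T : Set α) ⊆ s → (T.card : ℝ) ≤ N) :
    s.Finite ∧ (s.ncard : ℝ) ≤ N := by
  have hf : s.Finite := by
    by_contra hinf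
    obtain ⟨n, hn⟩ := exists_nat_gt N
    obtain ⟨T, hT, hc⟩ := Set.Infinite.exists_subset_card_eq hinf n
    have := h T hT
    rw [hc] at this
    linarith
  refine ⟨hf, ?_⟩
  rw [Set.ncard_eq_toFinset_card _ hf]
  exact h _ (by simp)

/-- uniform count of the difference set -/
def DCount (Λ : Set ℝ) (A B : ℝ) : Prop :=
  ∀ a b, a ≤ b → (Dif Λ ∩ Set.Icc a b).Finite ∧ ((Dif Λ ∩ Set.Icc a b).ncard : ℝ) ≤ A * (b - a) + B

lemma dif_count {Λ : Set ℝ} {δ c : ℝ} (hδ : 0 < δ) (hc : 0 < c) (hsep : USep δ Λ)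
    (hd : CDen Λ δ c) : ∃ A B : ℝ, 0 < A ∧ 0 < B ∧ DCount Λ A B := by
  refine ⟨(2 / δ + 1) / c / δ, (2 / δ + 1) / c * 3, by positivity, by positivity, fun a b hab => ?_⟩
  apply finite_of_card_le
  intro T hT
  have := dif_finset_count hδ hc hsep hd a b hab T (fun h hh => (hT hh).1) (fun h hh => (hT hh).2)
  refine this.trans (le_of_eq ?_)
  ring

lemma shift_density {Λ : Set ℝ} {δ c A B : ℝ} (hδ : 0 < δ) (hd : CDen Λ δ c)
    (hD : DCount Λ A B) (h : ℝ) (hh : h ∈ Dif Λ) :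
    ∃ r0 : ℝ, ∀ r ≥ r0, c * r ≤ (({x ∈ Λ | x + h ∈ Λ} ∩ Set.Icc (-r) r).ncard : ℝ) := by
  classical
  obtain ⟨hf, -⟩ := hD (h - 1) (h + 1) (by linarith)
  obtain ⟨ε0, hε0, hgap⟩ := exists_gap hf.toFinset
  set ε := min (min ε0 1) δ with hεd
  have hε : 0 < ε := lt_min (lt_min hε0 one_pos) hδ
  obtain ⟨r0, hr0⟩ := hd h hh ε hε (min_le_right _ _)
  refine ⟨r0, fun r hr => (hr0 r hr).trans (le_of_eq ?_)⟩
  congr 3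
  ext x
  constructor
  · rintro ⟨hx, y, hy, hlt⟩
    refine ⟨hx, ?_⟩
    have h1 : |y - x - h| < 1 := hlt.trans_le ((min_le_left _ _).trans (min_le_right _ _))
    have h2 : |y - x - h| < ε0 := hlt.trans_le ((min_le_left _ _).trans (min_le_left _ _))
    have h3 := abs_lt.1 h1
    by_cases he : y - x = h
    · have : x + h = y := by linarith
      rw [this]; exact hy
    · have := hgap (y - x) (by simp only [Set.Finite.mem_toFinset]; exact ⟨⟨x, hx, y, hy, rfl⟩, by constructor <;> linarith [h3.1, h3.2]⟩)
        h (by simp only [Set.Finite.mem_toFinset]; exact ⟨hh, by constructor <;> linarith⟩) he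
      linarith
  · rintro ⟨hx, hy⟩
    exact ⟨hx, x + h, hy, by simpa using hε⟩

/-- discrete intermediate values: a slowly varying function of a sequence with few values -/
lemma walk_one {u : ℕ → ℝ} {f : ℝ → ℝ} {C : ℝ} (V : Finset ℝ) (k : ℕ)
    (hC : 0 < C) (hu : ∀ j ≤ k, u j ∈ V) (hs : ∀ j < k, |f (u (j+1)) - f (u j)| ≤ C) :
    f (u k) ≤ f (u 0) + 2 * C * (V.card + 1) := by
  by_contra hcon
  push Not at hcon
  have key : ∀ i ≤ V.card, ∃ j ≤ k, f (u 0) + 2 * C * i ≤ f (u j) ∧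
      f (u j) < f (u 0) + 2 * C * (i + 1) := by
    intro i hi
    have hi' : (i : ℝ) ≤ V.card := by exact_mod_cast hi
    have hex : ∃ j, f (u 0) + 2 * C * i ≤ f (u j) := ⟨k, by nlinarith⟩
    classical
    have hk : Nat.find hex ≤ k := Nat.find_min' hex (by nlinarith)
    refine ⟨Nat.find hex, hk, Nat.find_spec hex, ?_⟩
    rcases Nat.eq_zero_or_pos (Nat.find hex) with h0 | h0
    · rw [h0]
      have : (0:ℝ) ≤ i := Nat.cast_nonneg i
      nlinarith
    · obtain ⟨m, hm⟩ := Nat.exists_eq_succ_of_ne_zero h0.ne'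
      have h1 := Nat.find_min hex (m := m) (by omega)
      push Not at h1
      have h2 := abs_le.1 (hs m (by omega))
      rw [hm, Nat.succ_eq_add_one]
      linarith [h2.2]
  choose! j hj1 hj2 hj3 using key
  have hc : (Finset.range (V.card + 1)).card ≤ V.card := by
    apply Finset.card_le_card_of_injOn (fun i => u (j i))
    · intro i hi
      simp only [Finset.coe_range, Set.mem_Iio] at hi
      exact hu _ (hj1 i (by omega))
    · intro i hi i' hi' he
      simp only [Finset.coe_range, Set.mem_Iio] at hi hi'
      simp only at he
      have a1 := hj2 i (by omega)
      have a2 := hj3 i (by omega)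
      have b1 := hj2 i' (by omega)
      have b2 := hj3 i' (by omega)
      rw [he] at a1 a2
      have c1 : (i : ℝ) < i' + 1 := by nlinarith
      have c2 : (i' : ℝ) < i + 1 := by nlinarith
      have d1 : i < i' + 1 := by exact_mod_cast c1
      have d2 : i' < i + 1 := by exact_mod_cast c2
      omega
  simp at hc

lemma walk_two {u : ℕ → ℝ} {f : ℝ → ℝ} {C : ℝ} (V : Finset ℝ) (k : ℕ)
    (hC : 0 < C) (hu : ∀ j ≤ k, u j ∈ V) (hs : ∀ j < k, |f (u (j+1)) - f (u j)| ≤ C) :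
    |f (u k) - f (u 0)| ≤ 2 * C * (V.card + 1) := by
  have h1 := walk_one (f := f) V k hC hu hs
  have h2 := walk_one (f := fun x => - f x) V k hC hu (by
    intro j hj
    have := hs j hj
    rw [abs_sub_comm] at this
    convert this using 2
    ring)
  rw [abs_le]; constructor <;> linarith

/-- quasi-additive functions on `ℕ` are almost linear -/
lemma quasi_lin {a : ℕ → ℝ} {C K : ℝ} (hq : ∀ m n, |a (m + n) - a m - a n| ≤ C)
    (hK : ∀ n, |a n| ≤ K * n) : ∃ l : ℝ, ∀ n, |a n - l * n| ≤ C := by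
  have hC : 0 ≤ C := (abs_nonneg _).trans (hq 0 0)
  have s1 : Subadditive (fun n => a n + C) := by
    intro m n
    have := abs_le.1 (hq m n)
    simp only
    linarith [this.2]
  have s2 : Subadditive (fun n => - a n + C) := by
    intro m n
    have := abs_le.1 (hq m n)
    simp only
    linarith [this.1]
  have hb : ∀ b : ℕ → ℝ, (∀ n, |b n| ≤ K * n) →
      BddBelow (Set.range fun n => (b n + C) / (n:ℝ)) := by
    intro b hb
    refine ⟨min (-K) 0, ?_⟩
    rintro _ ⟨n, rfl⟩
    simp only
    rcases Nat.eq_zero_or_pos n with rfl | hn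
    · simp
    · have hn' : (0:ℝ) < n := by exact_mod_cast hn
      refine (min_le_left _ _).trans ?_
      rw [le_div_iff₀ hn']
      have := abs_le.1 (hb n)
      linarith [this.1]
  have b1 := hb a hK
  have b2 := hb (fun n => - a n) (by intro n; rw [abs_neg]; exact hK n)
  have t1 := s1.tendsto_lim b1
  have t2 := s2.tendsto_lim b2
  have hsum : s1.lim + s2.lim = 0 := by
    have t3 := t1.add t2
    have t4 : Tendsto (fun n : ℕ => (2 * C) / (n:ℝ)) atTop (nhds 0) :=
      tendsto_const_div_atTop_nhds_zero_nat _
    refine tendsto_nhds_unique t3 (t4.congr ?_)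
    intro n
    rw [← add_div]
    congr 1
    ring
  refine ⟨s1.lim, fun n => ?_⟩
  rcases Nat.eq_zero_or_pos n with rfl | hn
  · have := hK 0
    simp only [Nat.cast_zero, mul_zero] at this
    have h0 : a 0 = 0 := abs_eq_zero.1 (le_antisymm this (abs_nonneg _))
    simpa [h0] using hC
  · have hn' : (0:ℝ) < n := by exact_mod_cast hn
    have e1 := s1.lim_le_div b1 hn.ne'
    have e2 := s2.lim_le_div b2 hn.ne'
    rw [le_div_iff₀ hn'] at e1 e2
    have e3 : s2.lim = - s1.lim := by linarith
    rw [e3] at e2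
    rw [abs_le]; constructor <;> linarith

lemma quasi_lin_int {a : ℤ → ℝ} {C K : ℝ} (hq : ∀ m n, |a (m + n) - a m - a n| ≤ C)
    (h0 : a 0 = 0)
    (hK : ∀ n : ℕ, |a n| ≤ K * n) : ∃ l : ℝ, ∀ n : ℤ, |a n - l * n| ≤ 2 * C := by
  obtain ⟨l, hl⟩ := quasi_lin (a := fun n : ℕ => a n) (C := C) (K := K)
    (fun m n => by have := hq m n; push_cast; exact this) hK
  have hC : 0 ≤ C := (abs_nonneg _).trans (hq 0 0)
  refine ⟨l, fun n => ?_⟩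
  obtain ⟨m, rfl | rfl⟩ := n.eq_nat_or_neg
  · have := hl m
    push_cast
    linarith
  · have h1 := abs_le.1 (hl m)
    have h2 := hq m (-m)
    rw [add_neg_cancel, h0] at h2
    have h3 := abs_le.1 h2
    push_cast
    rw [abs_le]; constructor <;> linarith [h1.1, h1.2, h3.1, h3.2]

/-- additive functions on the difference set are almost linear -/
lemma almost_linear {Λ : Set ℝ} {A B R : ℝ} (hD : DCount Λ A B) (hR0 : 0 < R)
    (hR : ∀ x : ℝ, ∃ l ∈ Λ, |l - x| ≤ R) (f : ℝ → ℝ)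
    (hf : ∀ x ∈ Λ, ∀ y ∈ Λ, ∀ z ∈ Λ, f (z - x) = f (z - y) + f (y - x)) :
    ∃ l C : ℝ, ∀ d ∈ Dif Λ, |f d - l * d| ≤ C := by
  choose p hpΛ hp using fun n : ℤ => hR n
  -- bound on small differences
  have hC0 : ∃ C0 > (0:ℝ), ∀ d ∈ Dif Λ, |d| ≤ 2 * R + 1 → |f d| ≤ C0 := by
    obtain ⟨hfin, -⟩ := hD (-(2 * R + 1)) (2 * R + 1) (by linarith)
    obtain ⟨C, hC⟩ := (hfin.image (fun d => |f d|)).bddAbove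
    refine ⟨max C 1, lt_max_of_lt_right one_pos, fun d hd hdb => ?_⟩
    exact (hC ⟨d, ⟨hd, abs_le.1 hdb⟩, rfl⟩).trans (le_max_left _ _)
  obtain ⟨C0, hC0p, hC0⟩ := hC0
  have hstep : ∀ n, |f (p (n + 1) - p n)| ≤ C0 := by
    intro n
    apply hC0 _ ⟨_, hpΛ n, _, hpΛ (n+1), rfl⟩
    have h1 := abs_le.1 (hp n)
    have h2 := abs_le.1 (hp (n+1))
    push_cast at h2
    rw [abs_le]; constructor <;> linarith [h1.1, h1.2, h2.1, h2.2]
  set N : ℝ := A * (4 * R) + B with hN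
  set C1 : ℝ := 2 * (2 * C0) * (N + 1) with hC1
  have hwalk : ∀ (m i : ℤ) (k : ℕ), |f (p (i + k + m) - p (i + k)) - f (p (i + m) - p i)| ≤ C1 := by
    intro m i k
    obtain ⟨hfin, hcard⟩ := hD (m - 2 * R) (m + 2 * R) (by linarith)
    have hw := walk_two (u := fun j : ℕ => p (i + j + m) - p (i + j)) (f := f) (C := 2 * C0)
      hfin.toFinset k (by linarith) (by
        intro j hj
        simp only [Set.Finite.mem_toFinset]
        refine ⟨⟨_, hpΛ _, _, hpΛ _, rfl⟩, ?_⟩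
        have h1 := abs_le.1 (hp (i + j + m))
        have h2 := abs_le.1 (hp (i + j))
        push_cast at h1 h2
        constructor <;> linarith [h1.1, h1.2, h2.1, h2.2]) (by
        intro j hj
        have e1 := hf _ (hpΛ (i + j)) _ (hpΛ (i + j + m)) _ (hpΛ (i + j + m + 1))
        have e2 := hf _ (hpΛ (i + j)) _ (hpΛ (i + j + 1)) _ (hpΛ (i + j + m + 1))
        have e3 : (i + ((j + 1 : ℕ) : ℤ) + m) = i + j + m + 1 := by push_cast; ring
        have e4 : (i + ((j + 1 : ℕ) : ℤ)) = i + j + 1 := by push_cast; ring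
        rw [e3, e4]
        have s1 := abs_le.1 (hstep (i + j + m))
        have s2 := abs_le.1 (hstep (i + j))
        rw [abs_le]; constructor <;> linarith [s1.1, s1.2, s2.1, s2.2])
    rw [← Set.ncard_eq_toFinset_card _ hfin] at hw
    simp only [Nat.cast_zero, add_zero] at hw
    refine hw.trans ?_
    have : ((Dif Λ ∩ Set.Icc ((m:ℝ) - 2 * R) (m + 2 * R)).ncard : ℝ) ≤ N := by
      refine hcard.trans (le_of_eq ?_)
      rw [hN]; ring
    rw [hC1]
    gcongr
  have hwalk2 : ∀ m i j : ℤ, |f (p (j + m) - p j) - f (p (i + m) - p i)| ≤ C1 := by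
    intro m i j
    rcases le_total i j with h | h
    · obtain ⟨k, hk⟩ := Int.le.dest h
      have := hwalk m i k
      rw [hk] at this; exact this
    · obtain ⟨k, hk⟩ := Int.le.dest h
      have := hwalk m j k
      rw [hk] at this
      rw [abs_sub_comm]; exact this
  have hf0 : ∀ n, f (p n - p n) = 0 := by
    intro n
    have := hf _ (hpΛ n) _ (hpΛ n) _ (hpΛ n)
    linarith
  obtain ⟨l, hl⟩ := quasi_lin_int (a := fun n => f (p n - p 0)) (C := C1) (K := C0) (by
      intro m n
      have h1 := hwalk2 n 0 m
      rw [zero_add] at h1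
      have h2 := hf _ (hpΛ 0) _ (hpΛ m) _ (hpΛ (m + n))
      rw [h2]
      convert h1 using 2
      ring) (hf0 0) (by
      intro n
      induction n with
      | zero => have := hf0 0; rw [Nat.cast_zero, this]; simp
      | succ n ih =>
        have h2 := hf _ (hpΛ 0) _ (hpΛ n) _ (hpΛ (n + 1))
        push_cast
        rw [h2]
        refine (abs_add_le _ _).trans ?_
        have := hstep n
        linarith)
  have hC1' : 0 ≤ C1 := (abs_nonneg _).trans (hwalk2 0 0 0)
  refine ⟨l, 2 * C0 + 4 * C1 + |l| * 2, ?_⟩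
  rintro d ⟨x, hx, y, hy, rfl⟩
  have hnear : ∀ z ∈ Λ, ∃ n : ℤ, |z - n| ≤ 1 ∧ |f (z - p n)| ≤ C0 ∧ |f (p n - z)| ≤ C0 := by
    intro z hz
    refine ⟨⌊z⌋, ?_, ?_, ?_⟩
    · have h1 := Int.floor_le z
      have h2 := Int.lt_floor_add_one z
      rw [abs_le]; constructor <;> linarith
    · apply hC0 _ ⟨_, hpΛ _, _, hz, rfl⟩
      have h1 := Int.floor_le z
      have h2 := Int.lt_floor_add_one z
      have h3 := abs_le.1 (hp ⌊z⌋)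
      rw [abs_le]; constructor <;> linarith [h3.1, h3.2]
    · apply hC0 _ ⟨_, hz, _, hpΛ _, rfl⟩
      have h1 := Int.floor_le z
      have h2 := Int.lt_floor_add_one z
      have h3 := abs_le.1 (hp ⌊z⌋)
      rw [abs_le]; constructor <;> linarith [h3.1, h3.2]
  obtain ⟨n, hn1, -, hn3⟩ := hnear x hx
  obtain ⟨m, hm1, hm2, -⟩ := hnear y hy
  have q1 := hf _ hx _ (hpΛ m) _ hy
  have q2 := hf _ hx _ (hpΛ n) _ (hpΛ m)
  have q3 := hf _ (hpΛ 0) _ (hpΛ n) _ (hpΛ m)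
  have r1 := abs_le.1 (hl m)
  have r2 := abs_le.1 (hl n)
  have hlin : |l * ((m - n : ℝ) - (y - x))| ≤ |l| * 2 := by
    rw [abs_mul]
    apply mul_le_mul_of_nonneg_left _ (abs_nonneg _)
    have h1 := abs_le.1 hn1
    have h2 := abs_le.1 hm1
    rw [abs_le]; constructor <;> linarith [h1.1, h1.2, h2.1, h2.2]
  have hlinB := abs_le.1 hlin
  have a1 := abs_le.1 hn3
  have a2 := abs_le.1 hm2
  rw [q1, q2]
  rw [abs_le]; constructor <;> linarith [r1.1, r1.2, r2.1, r2.2, a1.1, a1.2, a2.1, a2.2, hlinB.1, hlinB.2]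

/-- the subgroup generated by the differences is finitely generated -/
lemma dif_fg {Λ : Set ℝ} {A B R : ℝ} (hD : DCount Λ A B) (hR0 : 0 < R)
    (hR : ∀ x : ℝ, ∃ l ∈ Λ, |l - x| ≤ R) :
    ∃ G : Finset ℝ, Dif Λ ⊆ AddSubgroup.closure (↑G : Set ℝ) := by
  obtain ⟨hfin, -⟩ := hD (-(2 * R + 1)) (2 * R + 1) (by linarith)
  refine ⟨hfin.toFinset, ?_⟩
  rw [Set.Finite.coe_toFinset]
  set H := AddSubgroup.closure (Dif Λ ∩ Set.Icc (-(2 * R + 1)) (2 * R + 1)) with hH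
  choose p hpΛ hp using fun n : ℤ => hR n
  have hmem : ∀ x ∈ Λ, ∀ y ∈ Λ, |y - x| ≤ 2 * R + 1 → y - x ∈ H := fun x hx y hy h =>
    AddSubgroup.subset_closure ⟨⟨x, hx, y, hy, rfl⟩, abs_le.1 h⟩
  have hstep : ∀ n, p (n + 1) - p n ∈ H := by
    intro n
    apply hmem _ (hpΛ n) _ (hpΛ (n+1))
    have h1 := abs_le.1 (hp n)
    have h2 := abs_le.1 (hp (n+1))
    push_cast at h2
    rw [abs_le]; constructor <;> linarith [h1.1, h1.2, h2.1, h2.2]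
  have h0 : ∀ n : ℤ, p n - p 0 ∈ H := by
    intro n
    induction n using Int.induction_on with
    | zero => simp
    | succ i ih =>
      have := H.add_mem (hstep i) ih
      convert this using 1; ring
    | pred i ih =>
      have := H.sub_mem ih (hstep (-i - 1))
      rw [sub_add_cancel] at this
      convert this using 1; ring
  have hx0 : ∀ x ∈ Λ, x - p 0 ∈ H := by
    intro x hx
    have h1 := Int.floor_le x
    have h2 := Int.lt_floor_add_one x
    have h3 := abs_le.1 (hp ⌊x⌋)
    have := hmem _ (hpΛ ⌊x⌋) _ hx (by
      rw [abs_le]; constructor <;> linarith [h3.1, h3.2])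
    have := H.add_mem this (h0 ⌊x⌋)
    convert this using 1; ring
  rintro d ⟨x, hx, y, hy, rfl⟩
  have := H.sub_mem (hx0 y hy) (hx0 x hx)
  simpa using this

/-- generic evaluation point -/
lemma exists_generic {ι : Type*} [Countable ι] (P : ι → Polynomial ℝ) :
    ∃ t : ℝ, ∀ i, (P i).eval t = 0 → P i = 0 := by
  by_contra hcon
  push Not at hcon
  have hc : (⋃ i : ι, {t : ℝ | (P i).eval t = 0 ∧ P i ≠ 0}).Countable := by
    apply Set.countable_iUnion
    intro i
    by_cases h : P i = 0
    · simp [h]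
    · apply Set.Finite.countable
      apply (P i).roots.toFinset.finite_toSet.subset
      rintro t ⟨ht, -⟩
      simp [h, ht]
  have hu : (⋃ i : ι, {t : ℝ | (P i).eval t = 0 ∧ P i ≠ 0}) = Set.univ := by
    ext t
    simpa using hcon t
  rw [hu] at hc
  exact Cardinal.not_countable_real hc

lemma generic_hom (G : Finset ℝ) : ∃ f : ℝ → ℝ,
    (∀ x ∈ AddSubgroup.closure (↑G : Set ℝ), ∀ y ∈ AddSubgroup.closure (↑G : Set ℝ),
      f (x + y) = f x + f y) ∧
    ∀ l : ℝ, ∃ cL > (0:ℝ), ∀ x ∈ AddSubgroup.closure (↑G : Set ℝ), f x = l * x →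
      ∃ m : ℤ, x = cL * m := by
  classical
  set H := AddSubgroup.closure (↑G : Set ℝ) with hH
  have hfg : H.FG := ⟨G, rfl⟩
  haveI : AddGroup.FG H := (AddGroup.fg_iff_addSubgroup_fg H).2 hfg
  haveI : Module.Finite ℤ H := Module.Finite.iff_addGroup_fg.2 inferInstance
  haveI : Module.Free ℤ H := inferInstance
  set b := Module.finBasis ℤ H with hb
  haveI : Countable H := b.equivFun.toEquiv.countable_iff.2 inferInstance
  obtain ⟨t, ht⟩ := exists_generic (fun q : H × H =>
    ∑ i : Fin (Module.finrank ℤ H), Polynomial.C ((q.2 : ℝ) * (b.repr q.1 i : ℝ) - (q.1:ℝ) * (b.repr q.2 i : ℝ)) *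
      (Polynomial.X : Polynomial ℝ) ^ (i : ℕ))
  set g : H → ℝ := fun x => ∑ i, (b.repr x i : ℝ) * t ^ (i : ℕ) with hg
  have hgadd : ∀ x y, g (x + y) = g x + g y := by
    intro x y
    simp only [hg, map_add, Finsupp.add_apply, Int.cast_add, add_mul, Finset.sum_add_distrib]
  have hgen : ∀ x y : H, (y:ℝ) * g x = x * g y → ∀ i, (y : ℝ) * (b.repr x i : ℝ) = x * (b.repr y i : ℝ) := by
    intro x y hxy i
    have h1 := ht (x, y) (by
      simp only [Polynomial.eval_finset_sum, Polynomial.eval_mul, Polynomial.eval_C,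
        Polynomial.eval_pow, Polynomial.eval_X]
      simp only [sub_mul, Finset.sum_sub_distrib, mul_assoc, ← Finset.mul_sum]
      exact sub_eq_zero.2 hxy)
    have h2 := congrArg (fun p => Polynomial.coeff p (i : ℕ)) h1
    simp only [Polynomial.finset_sum_coeff, Polynomial.coeff_C_mul, Polynomial.coeff_X_pow,
      Polynomial.coeff_zero] at h2
    rw [Finset.sum_eq_single i] at h2
    · simp only [if_true, mul_one] at h2
      linarith
    · intro j _ hj
      rw [if_neg, mul_zero]
      intro h; exact hj (Fin.ext h.symm)
    · simp
  refine ⟨fun x => if h : x ∈ H then g ⟨x, h⟩ else 0, ?_, ?_⟩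
  · intro x hx y hy
    simp only [dif_pos hx, dif_pos hy, dif_pos (H.add_mem hx hy)]
    rw [← hgadd]
    rfl
  · intro l
    by_cases hL : ∃ x0 : H, (x0 : ℝ) ≠ 0 ∧ g x0 = l * x0
    · obtain ⟨x0, hx0, hgx0⟩ := hL
      have : ∃ i, b.repr x0 i ≠ 0 := by
        by_contra hcon
        push Not at hcon
        have h1 : b.repr x0 = 0 := Finsupp.ext hcon
        have h2 : x0 = 0 := by simpa using h1
        exact hx0 (by rw [h2]; rfl)
      obtain ⟨i, hi⟩ := this
      have hiR : (b.repr x0 i : ℝ) ≠ 0 := by exact_mod_cast hi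
      refine ⟨|(x0 : ℝ) / b.repr x0 i|, abs_pos.2 (div_ne_zero hx0 hiR), ?_⟩
      intro x hx hfx
      simp only [dif_pos hx] at hfx
      have h1 := hgen x0 ⟨x, hx⟩ (by rw [hgx0, hfx]; simp only; ring) i
      simp only at h1
      have h2 : x = (x0 : ℝ) / b.repr x0 i * (b.repr ⟨x, hx⟩ i : ℝ) := by
        field_simp
        linarith
      rcases abs_choice ((x0 : ℝ) / b.repr x0 i) with h | h
      · exact ⟨b.repr ⟨x, hx⟩ i, by rw [h]; exact h2⟩
      · exact ⟨- b.repr ⟨x, hx⟩ i, by rw [h]; push_cast; rw [neg_mul_neg]; exact h2⟩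
    · push Not at hL
      refine ⟨1, one_pos, fun x hx hfx => ⟨0, ?_⟩⟩
      simp only [dif_pos hx] at hfx
      by_contra hne
      exact hL ⟨x, hx⟩ (by simpa using hne) hfx

lemma window_count {S : Set ℝ} {T q : ℝ} (hT : 0 ≤ T) (hSf : ∀ a b, (S ∩ Set.Icc a b).Finite)
    (hq : ∀ a, ((S ∩ Set.Icc a (a + T)).ncard : ℝ) ≤ q) (n : ℕ) (a : ℝ) :
    ((S ∩ Set.Icc a (a + (n + 1) * T)).ncard : ℝ) ≤ (n + 1) * q := by
  induction n with
  | zero => simpa using hq a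
  | succ n ih =>
    have hsub : S ∩ Set.Icc a (a + ((n + 1 : ℕ) + 1) * T) ⊆ (S ∩ Set.Icc a (a + (n + 1) * T)) ∪
        (S ∩ Set.Icc (a + (n + 1) * T) (a + (n + 1) * T + T)) := by
      rintro x ⟨hx, h1, h2⟩
      push_cast at h2
      rcases le_total x (a + (n + 1) * T) with h | h
      · exact Or.inl ⟨hx, h1, h⟩
      · exact Or.inr ⟨hx, h, by linarith⟩
    have h1 := Set.ncard_le_ncard hsub ((hSf _ _).union (hSf _ _))
    have h2 := h1.trans (Set.ncard_union_le _ _)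
    have h3 : ((S ∩ Set.Icc a (a + ((n + 1 : ℕ) + 1) * T)).ncard : ℝ) ≤
      ((S ∩ Set.Icc a (a + (n + 1) * T)).ncard : ℝ) +
      ((S ∩ Set.Icc (a + (n + 1) * T) (a + (n + 1) * T + T)).ncard : ℝ) := by exact_mod_cast h2
    have := hq (a + (n + 1) * T)
    push_cast at h3 ⊢
    linarith

lemma exists_window {S : Set ℝ} {T c r0 : ℝ} (hT : 0 < T) (hc : 0 < c)
    (hSf : ∀ a b, (S ∩ Set.Icc a b).Finite)
    (hr : ∀ r ≥ r0, c * r ≤ ((S ∩ Set.Icc (-r) r).ncard : ℝ)) :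
    ∃ w, c * T / 4 ≤ ((S ∩ Set.Icc w (w + T)).ncard : ℝ) := by
  by_contra hcon
  push Not at hcon
  obtain ⟨n, hn⟩ := exists_nat_ge (2 * r0 / T)
  have hn0 : (0:ℝ) ≤ n := Nat.cast_nonneg n
  set r := (n + 1) * T / 2 with hrd
  have hr0 : r0 ≤ r := by
    rw [div_le_iff₀ hT] at hn
    rw [hrd]; nlinarith
  have h1 := hr r hr0
  have h2 := window_count hT.le hSf (fun a => (hcon a).le) n (-r)
  have h3 : -r + (n + 1) * T = r := by rw [hrd]; ring
  rw [h3] at h2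
  have h4 : c * r = (n + 1) * (c * T / 4) * 2 := by rw [hrd]; ring
  have h5 : 0 < (n + 1) * (c * T / 4) := by positivity
  linarith

lemma class_count {Λ : Set ℝ} {δ c A B Cθ : ℝ} (hδ : 0 < δ) (hc : 0 < c) (hA : 0 < A) (hB : 0 < B)
    (hsep : USep δ Λ) (hd : CDen Λ δ c) (hD : DCount Λ A B) (θ : ℝ → ℝ) (H : AddSubgroup ℝ)
    (hDH : Dif Λ ⊆ H) (hθ : ∀ x ∈ H, ∀ y ∈ H, θ (x + y) = θ x + θ y)
    (hb : ∀ d ∈ Dif Λ, |θ d| ≤ Cθ) (x0 : ℝ) (hx0 : x0 ∈ Λ) :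
    ((fun x => θ (x - x0)) '' Λ).Finite := by
  classical
  have hmem : ∀ x ∈ Λ, ∀ y ∈ Λ, y - x ∈ H := fun x hx y hy => hDH ⟨x, hx, y, hy, rfl⟩
  refine (finite_of_card_le _ ((2 * A + B) * 4 / c) ?_).1
  intro T hT
  -- representatives
  have hrep : ∀ v ∈ T, ∃ x ∈ Λ, θ (x - x0) = v := fun v hv => hT hv
  choose! y hyΛ hyθ using hrep
  obtain ⟨Y, hY⟩ := ((T.image (fun v => |y v|)).finite_toSet).bddAbove
  have hY' : ∀ v ∈ T, |y v| ≤ max Y 0 := by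
    intro v hv
    refine le_trans (hY ?_) (le_max_left _ _)
    exact Finset.mem_coe.2 (Finset.mem_image_of_mem _ hv)
  set Z := max Y 0 with hZ
  have hZ0 : 0 ≤ Z := le_max_right _ _
  set L := 2 * Z + 1 with hL
  have hL1 : 1 ≤ L := by linarith
  -- small nonzero values
  have hε : ∃ ε > (0:ℝ), ∀ d ∈ Dif Λ, |d| ≤ L → |θ d| < ε → θ d = 0 := by
    obtain ⟨hfin, -⟩ := hD (-L) L (by linarith)
    obtain ⟨ε, hε, hg⟩ := exists_gap (insert 0 (hfin.toFinset.image θ))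
    refine ⟨ε, hε, fun d hdD hdL hlt => ?_⟩
    by_contra hne
    have := hg (θ d) (Finset.mem_insert_of_mem (Finset.mem_image_of_mem _ (by
      simp only [Set.Finite.mem_toFinset]; exact ⟨hdD, abs_le.1 hdL⟩))) 0
      (Finset.mem_insert_self _ _) hne
    rw [sub_zero] at this
    linarith
  obtain ⟨ε, hε, hεz⟩ := hε
  -- near maximal h
  have hne : (θ '' Dif Λ).Nonempty := ⟨_, x0 - x0, ⟨x0, hx0, x0, hx0, rfl⟩, rfl⟩
  have hbdd : BddAbove (θ '' Dif Λ) := by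
    refine ⟨Cθ, ?_⟩
    rintro _ ⟨d, hd, rfl⟩
    exact (abs_le.1 (hb d hd)).2
  obtain ⟨_, ⟨h, hh, rfl⟩, hlt⟩ := exists_lt_of_lt_csSup hne
    (show sSup (θ '' Dif Λ) - ε < sSup (θ '' Dif Λ) by linarith)
  set S := {x ∈ Λ | x + h ∈ Λ} with hS
  have hSd : ∀ x ∈ S, ∀ x' ∈ S, θ (x' - x) < ε := by
    intro x hx x' hx'
    have h1 : x' + h - x ∈ Dif Λ := ⟨x, hx.1, x' + h, hx'.2, rfl⟩
    have h2 := le_csSup hbdd (Set.mem_image_of_mem θ h1)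
    have h3 := hθ (x' - x) (hmem x hx.1 x' hx'.1) h (hDH hh)
    rw [show x' - x + h = x' + h - x by ring] at h3
    linarith
  have hneg : ∀ x ∈ H, θ (-x) = - θ x := by
    intro x hx
    have h0 := hθ 0 H.zero_mem 0 H.zero_mem
    have h1 := hθ x hx (-x) (H.neg_mem hx)
    rw [add_zero] at h0
    rw [add_neg_cancel] at h1
    linarith
  obtain ⟨r0, hr0⟩ := shift_density hδ hd hD h hh
  have hΛf : ∀ a b, (Λ ∩ Set.Icc a b).Finite := by
    intro a b
    rcases le_total a b with hab | hab
    · exact (sep_count hδ hsep a b hab).1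
    · refine ((sep_count hδ hsep b a hab).1).subset ?_
      rintro x ⟨hx, h1, h2⟩
      exact ⟨hx, by linarith, by linarith⟩
  have hSf : ∀ a b, (S ∩ Set.Icc a b).Finite := fun a b =>
    (hΛf a b).subset (Set.inter_subset_inter_left _ (fun x hx => hx.1))
  obtain ⟨w, hw⟩ := exists_window (T := L) (by linarith) hc hSf hr0
  set P := (hSf w (w + L)).toFinset with hP
  have hPm : ∀ x, x ∈ P ↔ x ∈ S ∧ x ∈ Set.Icc w (w + L) := by
    intro x; simp only [hP, Set.Finite.mem_toFinset]; rfl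
  rw [Set.ncard_eq_toFinset_card _ (hSf w (w + L)), ← hP] at hw
  have hPz : ∀ x ∈ P, ∀ x' ∈ P, θ (x' - x) = 0 := by
    intro x hx x' hx'
    rw [hPm] at hx hx'
    apply hεz _ ⟨x, hx.1.1, x', hx'.1.1, rfl⟩
    · rw [abs_le]; constructor <;> linarith [hx.2.1, hx.2.2, hx'.2.1, hx'.2.2]
    · have h1 := hSd x hx.1 x' hx'.1
      have h2 := hSd x' hx'.1 x hx.1
      rw [show x - x' = -(x' - x) by ring, hneg _ (hmem x hx.1.1 x' hx'.1.1)] at h2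
      rw [abs_lt]; constructor <;> linarith
  obtain ⟨hfin, hcount⟩ := hD (-Z - (w + L)) (Z - w) (by linarith)
  have hinj : (T ×ˢ P).card ≤ hfin.toFinset.card := by
    apply Finset.card_le_card_of_injOn (fun q => y q.1 - q.2)
    · rintro ⟨v, x⟩ hq
      simp only [Finset.coe_product, Set.mem_prod, Finset.mem_coe] at hq
      obtain ⟨hv, hx⟩ := hq
      rw [hPm] at hx
      simp only [Set.Finite.coe_toFinset]
      refine ⟨⟨x, hx.1.1, y v, hyΛ v hv, rfl⟩, ?_⟩
      have := abs_le.1 (hY' v hv)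
      constructor <;> linarith [hx.2.1, hx.2.2, this.1, this.2]
    · rintro ⟨v, x⟩ hq ⟨v', x'⟩ hq' he
      simp only [Finset.coe_product, Set.mem_prod, Finset.mem_coe] at hq hq' he
      have hz := hPz x' hq'.2 x hq.2
      have e1 : x - x' = y v - y v' := by linarith
      have hvv : v = v' := by
        have h1 := hθ (y v - y v') (hmem _ (hyΛ v' hq'.1) _ (hyΛ v hq.1)) (y v' - x0)
          (hmem _ hx0 _ (hyΛ v' hq'.1))
        rw [sub_add_sub_cancel, ← e1, hz, zero_add, hyθ v hq.1, hyθ v' hq'.1] at h1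
        exact h1
      subst hvv
      have : x = x' := by linarith
      rw [this]
  rw [Finset.card_product, ← Set.ncard_eq_toFinset_card _ hfin] at hinj
  have h1 : (T.card : ℝ) * P.card ≤ A * (Z - w - (-Z - (w + L))) + B := by
    refine le_trans ?_ hcount
    exact_mod_cast hinj
  have h2 : (T.card : ℝ) * (c * L / 4) ≤ (T.card : ℝ) * P.card :=
    mul_le_mul_of_nonneg_left hw (Nat.cast_nonneg _)
  have h3 : A * (Z - w - (-Z - (w + L))) + B ≤ (2 * A + B) * L := by
    have : A * (Z - w - (-Z - (w + L))) = A * (2 * L - 1) := by rw [hL]; ring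
    rw [this]; nlinarith
  rw [le_div_iff₀ hc]
  have h4 : (T.card : ℝ) * (c * L / 4) ≤ (2 * A + B) * L := h2.trans (h1.trans h3)
  refine le_of_mul_le_mul_right ?_ (show 0 < L by linarith)
  linarith

theorem combi {Λ : Set ℝ} {δ c R : ℝ} (hδ : 0 < δ) (hc : 0 < c) (hR0 : 0 < R) (hsep : USep δ Λ)
    (hR : ∀ x : ℝ, ∃ l ∈ Λ, |l - x| ≤ R) (hd : CDen Λ δ c) :
    ∃ cL > (0:ℝ), ∃ F : Finset ℝ, Λ ⊆ ⋃ τ ∈ F, Set.range (fun m : ℤ => cL * m + τ) := by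
  classical
  obtain ⟨A, B, hA, hB, hD⟩ := dif_count hδ hc hsep hd
  obtain ⟨G, hG⟩ := dif_fg hD hR0 hR
  obtain ⟨f, hfadd, hfL⟩ := generic_hom G
  set H := AddSubgroup.closure (↑G : Set ℝ) with hH
  have hmem : ∀ x ∈ Λ, ∀ y ∈ Λ, y - x ∈ H := fun x hx y hy => hG ⟨x, hx, y, hy, rfl⟩
  obtain ⟨l, C, hl⟩ := almost_linear hD hR0 hR f (by
    intro x hx y hy z hz
    rw [← hfadd _ (hmem y hy z hz) _ (hmem x hx y hy), sub_add_sub_cancel])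
  obtain ⟨cL, hcL, hcLm⟩ := hfL l
  obtain ⟨x0, hx0, -⟩ := hR 0
  have hθadd : ∀ x ∈ H, ∀ y ∈ H, (fun d => f d - l * d) (x + y) =
      (fun d => f d - l * d) x + (fun d => f d - l * d) y := by
    intro x hx y hy
    simp only [hfadd x hx y hy]
    ring
  have hfin := class_count hδ hc hA hB hsep hd hD (fun d => f d - l * d) H hG hθadd hl x0 hx0
  have hrep : ∀ v ∈ hfin.toFinset, ∃ x ∈ Λ, f (x - x0) - l * (x - x0) = v := by
    intro v hv
    simpa using hv
  choose! y hyΛ hyθ using hrep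
  refine ⟨cL, hcL, hfin.toFinset.image y, fun x hx => ?_⟩
  set v := f (x - x0) - l * (x - x0) with hv
  have hvm : v ∈ hfin.toFinset := by
    rw [Set.Finite.mem_toFinset]; exact ⟨x, hx, rfl⟩
  simp only [Set.mem_iUnion]
  refine ⟨y v, Finset.mem_image_of_mem _ hvm, ?_⟩
  have h1 := hθadd (x - y v) (hmem _ (hyΛ v hvm) _ hx) (y v - x0) (hmem _ hx0 _ (hyΛ v hvm))
  simp only [sub_add_sub_cancel] at h1
  rw [hyθ v hvm, ← hv] at h1
  obtain ⟨m, hm⟩ := hcLm (x - y v) (hmem _ (hyΛ v hvm) _ hx) (by linarith)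
  exact ⟨m, by simp only; linarith⟩

/-- arithmetic structure of the support (Theorem 4.1). -/
theorem stmt_15 (α : TemperedDist) (hΛ : UniformlyDiscrete (TDsupport α))
    (hS : UniformlyDiscrete (TDsupport (fourierTD α))) :
    ∃ cL > (0:ℝ), ∃ F : Finset ℝ,
      TDsupport α ⊆ ⋃ τ ∈ F, Set.range (fun m : ℤ => cL * m + τ) := by
  obtain ⟨δ, hδ, hsep⟩ := hΛ
  obtain ⟨δS, hδS, hsepS⟩ := hS
  have hsep' : USep δ (TDsupport α) := hsep
  have hsepS' : USep δS (TDsupport (fourierTD α)) := hsepS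
  rcases (TDsupport α).eq_empty_or_nonempty with he | hne
  · exact ⟨1, one_pos, ∅, by rw [he]; exact Set.empty_subset _⟩
  · obtain ⟨R, hR0, hR⟩ := rel_dense hδS hsepS' hne
    obtain ⟨c, hc, hd⟩ := density hδ hδS hsep' hsepS'
    exact combi hδ (half_pos hc) hR0 hsep' hR (cden_of hδ hc hsep' hd)
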